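/- arXiv:1105.5045 — 7 statements merged into one kernel-verified Lean document; each statement's English description precedes it below -/
import Mathlib

section
/- Let 0 < p ≤ 1 and let {b_ε}_{ε>0} ⊆ L¹([−π/2, π/2]) be a grazing collision family. Let f₀ ≥ 0 be an even probability density on ℝ with finite energy ∫ v² f₀(v) dv = 1, and for each ε let f_ε ∈ C¹([0,∞), L¹(ℝ)) be the unique nonnegative solution of the dissipative Kac equation ∂ₜ f̂_ε(ξ,t) = 2∫₀^{π/2} b_ε(θ)(f̂_ε(ξ cos^{p+1}θ, t) f̂_ε(ξ sin^{p+1}θ, t) − f̂_ε(ξ,t)) dθ with f̂_ε(·,0) = f̂₀. Let f̂(ξ,t) = f̂₀(ξ e^{−(p+1)t}) be the solution of the pure drift equation ∂ₜ f̂(ξ,t) = −(p+1) ξ ∂_ξ f̂(ξ,t) with the same initial datum. Then lim_{ε→0} sup_{t≥0, ξ≠0} |f̂_ε(ξ,t) − f̂(ξ,t)| / |ξ|² = 0. -/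
/-!
The drift solution `w(ξ,t) = φ(ξ e^{-(p+1)t})`, `φ = f̂₀`, is compared directly with `u = f̂_ε`.
Finite energy makes `φ'` a `1`-Lipschitz function vanishing at `0` (`exists_deriv_ftEven`), so `w`
is an approximate solution of the Kac equation: a Taylor expansion in `1 - cos^{p+1}θ` and the bound
`|1 - φ(y)| ≤ y²` give a consistency error at most a constant times `η ξ² ∫ b_ε sin²θ dθ`, where `η`
bounds `sin^p θ` on the support of `b_ε` (`angle_bounds`, `collision_integrand_bound`).

Put `r = u - w` and `B = ∫₀^{π/2} b_ε`. Since mass is conserved (`eq_one_of_logistic`), `|u| ≤ 1` and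
`r' + 2B r` is bounded by `2 ∫ b_ε (|r(ξ cos^{p+1}θ)| + |r(ξ sin^{p+1}θ)| + 3 η sin²θ ξ²) dθ`. The
inequality `cos^{2p+2}θ + sin^{2p+2}θ ≤ 1 - sin²θ/2` makes `6 η ξ²` a supersolution of this
problem. As `r` is only known to be bounded by `2`, the comparison is carried out by iteration
(`abs_le_of_relaxation_step`): for every `n`, `|r| ≤ 6 η ξ² + 2 (4Bt)ⁿ/n!`. Letting `n → ∞` gives
`|r| ≤ 6 η ξ²` for all `t` and `ξ`, and `η → 0` as the support of `b_ε` shrinks.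
-/

open Real MeasureTheory Set Filter Topology

noncomputable section

/-- Fourier transform of an even real density: `f̂(ξ) = ∫ cos(ξv) f(v) dv`. -/
def ftEven (f : ℝ → ℝ) (ξ : ℝ) : ℝ := ∫ v : ℝ, Real.cos (ξ * v) * f v

/-! ### Cosine transforms of densities -/

lemma integrable_cos_mul {f : ℝ → ℝ} (hf : Integrable f) (ξ : ℝ) :
    Integrable (fun v => Real.cos (ξ * v) * f v) :=
  hf.bdd_mul (c := 1) (by fun_prop) (ae_of_all _ fun v => Real.abs_cos_le_one _)

lemma continuous_ftEven {f : ℝ → ℝ} (hf : Integrable f) : Continuous (ftEven f) := by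
  refine continuous_of_dominated (bound := fun v => |f v|)
    (fun ξ => (integrable_cos_mul hf ξ).aestronglyMeasurable) ?_ hf.abs ?_
  · refine fun ξ => ae_of_all _ fun v => ?_
    rw [Real.norm_eq_abs, abs_mul]
    exact mul_le_of_le_one_left (abs_nonneg _) (Real.abs_cos_le_one _)
  · exact ae_of_all _ fun v => by fun_prop

lemma ftEven_zero (f : ℝ → ℝ) : ftEven f 0 = ∫ v, f v := by simp [ftEven]

lemma abs_ftEven_le_one {f : ℝ → ℝ} (hf : Integrable f) (h0 : ∀ v, 0 ≤ f v)
    (h1 : ftEven f 0 = 1) (ξ : ℝ) : |ftEven f ξ| ≤ 1 := by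
  rw [← h1, ftEven_zero]
  refine norm_integral_le_of_norm_le (f := fun v => Real.cos (ξ * v) * f v) hf
    (ae_of_all _ fun v => ?_)
  rw [Real.norm_eq_abs, abs_mul, abs_of_nonneg (h0 v)]
  exact mul_le_of_le_one_left (h0 v) (Real.abs_cos_le_one _)

/-- A density with unit energy has a differentiable cosine transform whose derivative is
`1`-Lipschitz and vanishes at the origin; this is where finiteness of the second moment enters. -/
lemma exists_deriv_ftEven {f : ℝ → ℝ} (h0 : ∀ v, 0 ≤ f v) (hf : Integrable f)
    (hE : Integrable (fun v : ℝ => v ^ 2 * f v)) (hE1 : ∫ v : ℝ, v ^ 2 * f v = 1) :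
    ∃ φ' : ℝ → ℝ, (∀ x, HasDerivAt (ftEven f) (φ' x) x) ∧ φ' 0 = 0 ∧
      ∀ a b, |φ' b - φ' a| ≤ |b - a| := by
  have hvf : Integrable (fun v : ℝ => v * f v) := by
    refine (hf.add hE).mono' (by
      exact measurable_id.aestronglyMeasurable.mul hf.aestronglyMeasurable)
      (ae_of_all _ fun v => ?_)
    have h2 : |v| ≤ 1 + v ^ 2 := abs_le.2 ⟨by nlinarith, by nlinarith⟩
    simp only [Pi.add_apply, Real.norm_eq_abs, abs_mul, abs_of_nonneg (h0 v)]
    nlinarith [h0 v]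
  have hsin : ∀ x, Integrable (fun v : ℝ => -Real.sin (x * v) * (v * f v)) := fun x =>
    hvf.bdd_mul (c := 1) (by fun_prop)
      (ae_of_all _ fun v => by simpa using Real.abs_sin_le_one _)
  refine ⟨fun x => ∫ v, -Real.sin (x * v) * (v * f v), fun x => ?_, by simp, fun a b => ?_⟩
  · refine (hasDerivAt_integral_of_dominated_loc_of_deriv_le (s := univ)
      (F := fun x v => Real.cos (x * v) * f v)
      (F' := fun x v => -Real.sin (x * v) * (v * f v))
      (bound := fun v => |v * f v|) univ_mem ?_ (integrable_cos_mul hf x)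
      (hsin x).aestronglyMeasurable ?_ hvf.abs ?_).2
    · exact Eventually.of_forall fun y => (integrable_cos_mul hf y).aestronglyMeasurable
    · refine ae_of_all _ fun v y _ => ?_
      rw [Real.norm_eq_abs, abs_mul, abs_neg]
      exact mul_le_of_le_one_left (abs_nonneg _) (Real.abs_sin_le_one _)
    · refine ae_of_all _ fun v y _ => ?_
      have h1 : HasDerivAt (fun y : ℝ => y * v) v y := by
        simpa using (hasDerivAt_id y).mul_const v
      have h2 := (h1.cos).mul_const (f v)
      exact h2.congr_deriv (by ring)
  · rw [← integral_sub (hsin b) (hsin a), ← Real.norm_eq_abs]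
    calc ‖∫ v, (-Real.sin (b * v) * (v * f v) - -Real.sin (a * v) * (v * f v))‖
        ≤ ∫ v, |b - a| * (v ^ 2 * f v) := by
          refine norm_integral_le_of_norm_le (hE.const_mul _) (ae_of_all _ fun v => ?_)
          have h1 : -Real.sin (b * v) * (v * f v) - -Real.sin (a * v) * (v * f v)
              = -(Real.sin (b * v) - Real.sin (a * v)) * v * f v := by ring
          rw [Real.norm_eq_abs, h1, abs_mul, abs_mul, abs_neg, abs_of_nonneg (h0 v)]
          have h2 := abs_sin_sub_sin_le (b * v) (a * v)
          rw [← sub_mul, abs_mul] at h2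
          calc _ ≤ |b - a| * |v| * |v| * f v := by
                  have := h0 v
                  gcongr
            _ = |b - a| * (v ^ 2 * f v) := by rw [← sq_abs v]; ring
      _ = |b - a| := by rw [integral_const_mul, hE1, mul_one]

/-- First-order Taylor estimate for a function whose derivative is `1`-Lipschitz. -/
lemma taylor_of_lipschitz_deriv {φ φ' : ℝ → ℝ} (hd : ∀ x, HasDerivAt φ (φ' x) x)
    (hL : ∀ a b, |φ' b - φ' a| ≤ |b - a|) (a b : ℝ) :
    |φ b - φ a - φ' a * (b - a)| ≤ (b - a) ^ 2 := by
  have h := (convex_uIcc a b).norm_image_sub_le_of_norm_hasDerivWithin_le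
    (f := fun z => φ z - φ' a * z) (f' := fun z => φ' z - φ' a) (C := |b - a|)
    (fun z _ => by
      have h1 : HasDerivAt (fun z : ℝ => φ' a * z) (φ' a) z := by
        simpa using (hasDerivAt_id z).const_mul (φ' a)
      exact ((hd z).sub h1).hasDerivWithinAt)
    (fun z hz => (hL a z).trans (abs_sub_left_of_mem_uIcc hz)) left_mem_uIcc right_mem_uIcc
  rw [Real.norm_eq_abs, Real.norm_eq_abs, ← abs_mul, abs_of_nonneg (mul_self_nonneg (b - a))] at h
  rw [sq]
  exact (congrArg abs (by ring)).trans_le h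

/-! ### Collision coefficients and consistency error -/

/-- Grazing expansion of the inelastic rotation coefficients: for small angles
`cos^{p+1}θ = 1 - (p+1)/2 sin²θ + o(sin²θ)`, while `sin^{p+1}θ` is quadratically negligible and
energy is dissipated at a rate at least `sin²θ / 2`. -/
lemma angle_bounds {p θ η : ℝ} (hp : 0 < p) (hp1 : p ≤ 1) (hθ : θ ∈ Icc 0 (π / 2))
    (hη : η ≤ 1 / 2) (hs : Real.sin θ ^ p ≤ η) :
    (Real.sin θ ^ (p + 1)) ^ 2 ≤ η * Real.sin θ ^ 2 ∧
    (Real.cos θ ^ (p + 1)) ^ 2 + (Real.sin θ ^ (p + 1)) ^ 2 ≤ 1 - Real.sin θ ^ 2 / 2 ∧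
    (1 - Real.cos θ ^ (p + 1)) ^ 2 ≤ η * Real.sin θ ^ 2 ∧
    |(1 - Real.cos θ ^ (p + 1)) - (p + 1) / 2 * Real.sin θ ^ 2| ≤ η * Real.sin θ ^ 2 := by
  have hπ := Real.pi_pos
  have hs0 : 0 ≤ Real.sin θ := Real.sin_nonneg_of_nonneg_of_le_pi hθ.1 (by linarith [hθ.2])
  have hs1 : Real.sin θ ≤ 1 := Real.sin_le_one θ
  have hc0 : 0 ≤ Real.cos θ := Real.cos_nonneg_of_mem_Icc ⟨by linarith [hθ.1], hθ.2⟩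
  have hcc : Real.cos θ ^ (p + 1) = (1 - Real.sin θ ^ 2) ^ ((p + 1) / 2) := by
    rw [← Real.cos_sq', ← Real.rpow_natCast_mul hc0]
    congr 1
    push_cast
    ring
  have hss : Real.sin θ ^ (p + 1) = Real.sin θ ^ p * Real.sin θ := by
    rw [Real.rpow_add' hs0 (by linarith), Real.rpow_one]
  have hsp0 : 0 ≤ Real.sin θ ^ p := Real.rpow_nonneg hs0 p
  have hsη : Real.sin θ ≤ η := by
    refine le_trans ?_ hs
    rcases hs0.eq_or_lt with h | h
    · rw [← h, Real.zero_rpow hp.ne']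
    · simpa using Real.rpow_le_rpow_of_exponent_ge h hs1 hp1
  rw [hcc, hss]
  generalize Real.sin θ ^ p = r at *
  generalize Real.sin θ = σ at *
  have hx0 : 0 ≤ σ ^ 2 := sq_nonneg σ
  have hxη : σ ^ 2 ≤ η := by nlinarith
  have hrr : r ^ 2 ≤ η := by nlinarith
  generalize hx : σ ^ 2 = x at *
  have hA : (1 - x) ^ ((p + 1) / 2) ≤ 1 - (p + 1) / 2 * x := by
    have := rpow_one_add_le_one_add_mul_self (s := -x) (p := (p + 1) / 2)
      (by linarith) (by linarith) (by linarith)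
    simpa [← sub_eq_add_neg] using this
  have hB : (1 - x) ^ ((1 - p) / 2) ≤ 1 - (1 - p) / 2 * x := by
    have := rpow_one_add_le_one_add_mul_self (s := -x) (p := (1 - p) / 2)
      (by linarith) (by linarith) (by linarith)
    simpa [← sub_eq_add_neg] using this
  have hAB : (1 - x) ^ ((p + 1) / 2) * (1 - x) ^ ((1 - p) / 2) = 1 - x := by
    rw [← Real.rpow_add (by linarith)]
    ring_nf
    simp
  have hA0 : 0 < (1 - x) ^ ((p + 1) / 2) := Real.rpow_pos_of_pos (by linarith) _
  have hAA : ((1 - x) ^ ((p + 1) / 2)) ^ 2 ≤ 1 - x := by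
    rw [← Real.rpow_mul_natCast (by linarith)]
    have := Real.rpow_le_rpow_of_exponent_ge (x := 1 - x) (y := ((p + 1) / 2) * (2 : ℕ)) (z := 1)
      (by linarith) (by linarith) (by push_cast; linarith)
    simpa using this
  generalize (1 - x) ^ ((p + 1) / 2) = C at *
  generalize (1 - x) ^ ((1 - p) / 2) = D at *
  have hC1 : 1 - x ≤ C * (1 - (1 - p) / 2 * x) := by
    rw [← hAB]; exact mul_le_mul_of_nonneg_left hB hA0.le
  have hCle : C ≤ 1 := hA.trans (by nlinarith)
  have hrs : (r * σ) ^ 2 ≤ η * x := by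
    rw [mul_pow, hx]; exact mul_le_mul_of_nonneg_right hrr hx0
  have h1C : 1 - C ≤ x := by nlinarith [mul_nonneg (sub_nonneg.2 hp1) hx0]
  refine ⟨hrs, by nlinarith, by nlinarith, ?_⟩
  rw [abs_of_nonneg (by linarith)]
  -- `(1 - C) - q x ≤ a x (1 - C)` with `q = (p+1)/2`, `a = 1 - q`
  have h3 : (1 - C) - (p + 1) / 2 * x ≤ (1 - p) / 2 * x * (1 - C) := by nlinarith
  have h4 : (1 - p) / 2 * x * (1 - C) ≤ 1 * x * η := by
    refine mul_le_mul ?_ (h1C.trans hxη) (by linarith) (by linarith)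
    exact mul_le_mul_of_nonneg_right (by linarith) hx0
  linarith

/-- Pointwise consistency estimate for the collision integrand. Here `C`, `S` are the collision
coefficients, `x = sin²θ`, `q = (p+1)/2`, `ξ e` is the frequency transported by the drift, and `U`,
`V` are the values of the solution at `ξ C`, `ξ S`. The dissipation `C² + S² ≤ 1 - x/2` absorbs
the consistency error `3 η x ξ²`. -/
lemma collision_integrand_bound {φ φ' : ℝ → ℝ} (hφ1 : ∀ y, |φ y| ≤ 1) (hφ'1 : ∀ y, |φ' y| ≤ |y|)
    (hT : ∀ a b, |φ b - φ a - φ' a * (b - a)| ≤ (b - a) ^ 2)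
    (hφ0 : ∀ y, |1 - φ y| ≤ y ^ 2)
    {C S x η q e ξ U V M : ℝ} (he0 : 0 ≤ e) (he1 : e ≤ 1) (hη0 : 0 ≤ η) (hx0 : 0 ≤ x)
    (hS : S ^ 2 ≤ η * x) (hCS : C ^ 2 + S ^ 2 ≤ 1 - x / 2) (hC : (1 - C) ^ 2 ≤ η * x)
    (hq : |(1 - C) - q * x| ≤ η * x) (hU : |U| ≤ 1)
    (hUC : |U - φ (ξ * C * e)| ≤ 6 * η * (ξ * C) ^ 2 + M)
    (hVS : |V - φ (ξ * S * e)| ≤ 6 * η * (ξ * S) ^ 2 + M) :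
    |U * V - φ (ξ * e) + q * x * (ξ * e * φ' (ξ * e))| ≤ 6 * η * ξ ^ 2 + 2 * M := by
  set y := ξ * e with hy
  have hyξ : y ^ 2 ≤ ξ ^ 2 := by
    rw [hy, mul_pow]
    exact mul_le_of_le_one_right (sq_nonneg _) (by nlinarith)
  have hηx : 0 ≤ η * x := mul_nonneg hη0 hx0
  have e1 : ξ * C * e = y * C := by rw [hy]; ring
  have e2 : ξ * S * e = y * S := by rw [hy]; ring
  rw [e1] at hUC
  rw [e2] at hVS
  have t1 : |U * (V - φ (y * S))| ≤ 6 * η * (ξ * S) ^ 2 + M := by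
    rw [abs_mul]
    exact (mul_le_of_le_one_left (abs_nonneg _) hU).trans hVS
  have t2 : |(U - φ (y * C)) * φ (y * S)| ≤ 6 * η * (ξ * C) ^ 2 + M := by
    rw [abs_mul]
    exact (mul_le_of_le_one_right (abs_nonneg _) (hφ1 _)).trans hUC
  have t3 : |φ (y * C) * (1 - φ (y * S))| ≤ η * x * ξ ^ 2 := by
    rw [abs_mul]
    refine (mul_le_of_le_one_left (abs_nonneg _) (hφ1 _)).trans ((hφ0 _).trans ?_)
    rw [mul_pow, mul_comm]
    exact mul_le_mul hS hyξ (sq_nonneg _) hηx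
  have t4 : |φ (y * C) - φ y - φ' y * (y * C - y)| ≤ η * x * ξ ^ 2 := by
    refine (hT _ _).trans ?_
    have : (y * C - y) ^ 2 = (1 - C) ^ 2 * y ^ 2 := by ring
    rw [this]
    exact mul_le_mul hC hyξ (sq_nonneg _) hηx
  have t5 : |((1 - C) - q * x) * (y * φ' y)| ≤ η * x * ξ ^ 2 := by
    rw [abs_mul]
    refine mul_le_mul hq ?_ (abs_nonneg _) hηx
    rw [abs_mul]
    calc |y| * |φ' y| ≤ |y| * |y| := mul_le_mul_of_nonneg_left (hφ'1 y) (abs_nonneg _)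
      _ = y ^ 2 := by rw [← sq, sq_abs]
      _ ≤ ξ ^ 2 := hyξ
  have h6 : 6 * η * (ξ * S) ^ 2 + 6 * η * (ξ * C) ^ 2 ≤ 6 * η * ξ ^ 2 * (1 - x / 2) := by
    have := mul_le_mul_of_nonneg_left hCS (show 0 ≤ 6 * η * ξ ^ 2 by positivity)
    linarith
  rw [abs_le] at *
  constructor <;> nlinarith

/-! ### Differential inequalities in time -/

/-- One-sided form of `abs_le_of_relaxation_step`. -/
lemma le_of_relaxation_step {y y' : ℝ → ℝ} {β k : ℝ} (n : ℕ) (hβ : 0 ≤ β) (hk : 0 ≤ k)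
    (hd : ∀ t ∈ Ici (0 : ℝ), HasDerivWithinAt y (y' t) (Ici 0) t) (h0 : y 0 ≤ 0)
    (hb : ∀ t ∈ Ici (0 : ℝ),
      y' t + β * y t ≤ β * (k + 2 * (2 * ((2 * β * t) ^ n / n.factorial)))) :
    ∀ t ∈ Ici (0 : ℝ), y t ≤ k + 2 * ((2 * β * t) ^ (n + 1) / (n + 1).factorial) := by
  intro t ht
  set m : ℝ → ℝ := fun t => 2 * ((2 * β * t) ^ (n + 1) / (n + 1).factorial) with hm
  have hmd : ∀ s, HasDerivAt m (β * (2 * (2 * ((2 * β * s) ^ n / n.factorial)))) s := by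
    intro s
    have h1 : HasDerivAt (fun s : ℝ => 2 * β * s) (2 * β) s := by
      simpa using (hasDerivAt_id s).const_mul (2 * β)
    have h2 := ((h1.pow (n + 1)).div_const ((n + 1).factorial : ℝ)).const_mul 2
    refine h2.congr_deriv ?_
    have : (n.factorial : ℝ) ≠ 0 := by positivity
    rw [Nat.factorial_succ]
    push_cast
    field_simp
  have hexp : ∀ s, HasDerivAt (fun s : ℝ => Real.exp (β * s)) (Real.exp (β * s) * β) s := by
    intro s
    simpa using ((hasDerivAt_id s).const_mul β).exp
  have hz : ∀ s ∈ Ici (0 : ℝ), HasDerivWithinAt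
      (fun s => Real.exp (β * s) * (y s - k - m s))
      (Real.exp (β * s) * β * (y s - k - m s) + Real.exp (β * s) *
        (y' s - β * (2 * (2 * ((2 * β * s) ^ n / n.factorial))))) (Ici 0) s := fun s hs =>
    (hexp s).hasDerivWithinAt.mul (((hd s hs).sub_const k).sub (hmd s).hasDerivWithinAt)
  have hanti := antitoneOn_of_hasDerivWithinAt_nonpos (convex_Ici (0 : ℝ))
    (fun s hs => (hz s hs).continuousWithinAt)
    (fun s hs => (hz s (interior_subset hs)).mono interior_subset)
    (fun s hs => by
      have hs0 : 0 ≤ s := interior_subset hs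
      have h1 := hb s hs0
      have h2 : 0 ≤ m s := by simp only [hm]; positivity
      have h3 : y' s + β * y s - β * k - β * m s
          - β * (2 * (2 * ((2 * β * s) ^ n / n.factorial))) ≤ 0 := by
        have := mul_nonneg hβ h2
        linarith
      have h4 := mul_nonpos_of_nonneg_of_nonpos (Real.exp_pos (β * s)).le h3
      linarith)
  have h1 := hanti (mem_Ici.2 le_rfl) ht ht
  have hm0 : m 0 = 0 := by simp [hm]
  simp only [hm0, mul_zero, Real.exp_zero, one_mul, sub_zero] at h1
  have h2 : Real.exp (β * t) * (y t - k - m t) ≤ 0 := h1.trans (by linarith)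
  have h3 := nonpos_of_mul_nonpos_right h2 (Real.exp_pos _)
  simp only [hm] at h3
  linarith

/-- One Picard step for `y' + β y`: a forcing bounded by `β k` plus the `n`-th term of an
exponential series yields a bound by `k` plus the next term of that series. -/
lemma abs_le_of_relaxation_step {y y' : ℝ → ℝ} {β k : ℝ} (n : ℕ) (hβ : 0 ≤ β) (hk : 0 ≤ k)
    (hd : ∀ t ∈ Ici (0 : ℝ), HasDerivWithinAt y (y' t) (Ici 0) t) (h0 : y 0 = 0)
    (hb : ∀ t ∈ Ici (0 : ℝ),
      |y' t + β * y t| ≤ β * (k + 2 * (2 * ((2 * β * t) ^ n / n.factorial)))) :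
    ∀ t ∈ Ici (0 : ℝ), |y t| ≤ k + 2 * ((2 * β * t) ^ (n + 1) / (n + 1).factorial) := by
  intro t ht
  refine abs_le'.2 ⟨le_of_relaxation_step n hβ hk hd h0.le
    (fun s hs => (abs_le'.1 (hb s hs)).1) t ht, ?_⟩
  refine le_of_relaxation_step (y := fun s => -y s) (y' := fun s => -y' s) n hβ hk
    (fun s hs => (hd s hs).neg) (by simp [h0]) (fun s hs => ?_) t ht
  have := (abs_le'.1 (hb s hs)).2
  linarith

/-- The logistic equation `m' = 2B (m² - m)` preserves the stationary value `1`. -/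
lemma eq_one_of_logistic {m : ℝ → ℝ} {B : ℝ} (h0 : m 0 = 1)
    (hd : ∀ t ∈ Ici (0 : ℝ), HasDerivWithinAt m (2 * (B * (m t * m t - m t))) (Ici 0) t) :
    ∀ t ∈ Ici (0 : ℝ), m t = 1 := by
  intro T hT
  have hcont : ContinuousOn m (Icc 0 T) := fun s hs =>
    ((hd s hs.1).continuousWithinAt).mono fun z hz => hz.1
  obtain ⟨L, hL⟩ := isCompact_Icc.exists_bound_of_continuousOn hcont
  have h := norm_le_gronwallBound_of_norm_deriv_right_le (f := fun s => m s - 1)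
    (f' := fun s => 2 * (B * (m s * m s - m s))) (δ := 0) (K := 2 * |B| * L) (ε := 0)
    (a := 0) (b := T) (hcont.sub continuousOn_const)
    (fun s hs => ((hd s hs.1).mono (Ici_subset_Ici.2 hs.1)).sub_const 1) (by simp [h0])
    (fun s hs => by
      have h1 := hL s ⟨hs.1, hs.2.le⟩
      have h2 : 2 * (B * (m s * m s - m s)) = 2 * B * m s * (m s - 1) := by ring
      rw [h2, norm_mul, norm_mul, norm_mul, add_zero]
      simp only [Real.norm_eq_abs, abs_two] at h1 ⊢
      gcongr)
    T ⟨hT, le_rfl⟩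
  simp only [gronwallBound_ε0, zero_mul, norm_le_zero_iff] at h
  linarith

/-! ### The grazing limit -/

/-- Grazing collision limit of the inelastic Kac model for initial data with
finite energy: the solutions converge to the solution of the pure drift
equation `∂ₜ f̂(ξ,t) = -(p+1) ξ ∂_ξ f̂(ξ,t)`, i.e. `f̂(ξ,t) = f̂₀(ξ e^{-(p+1)t})`. -/
theorem grazing_limit_finite_energy
    (p : ℝ) (hp : 0 < p) (hp1 : p ≤ 1)
    -- the grazing collision family {b_ε}
    (b : ℝ → ℝ → ℝ) (c d : ℝ → ℝ)
    (hb_int : ∀ ε > (0 : ℝ), IntegrableOn (b ε) (Icc (-(π / 2)) (π / 2)))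
    (hb_even : ∀ ε > (0 : ℝ), ∀ θ, b ε θ = b ε |θ|)
    (hb_nonneg : ∀ ε > (0 : ℝ), ∀ θ, 0 ≤ b ε θ)
    (hc_pos : ∀ ε > (0 : ℝ), 0 < c ε)
    (hsupp : ∀ ε > (0 : ℝ), ∀ θ, b ε θ ≠ 0 → c ε ≤ |θ| ∧ |θ| ≤ d ε)
    (hd_lim : Tendsto d (𝓝[>] 0) (𝓝 0))
    (hb_norm : ∀ ε > (0 : ℝ), ∫ θ in (0 : ℝ)..(π / 2), b ε θ * Real.sin θ ^ 2 = 1)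
    -- the even initial probability density f₀ with unit energy
    (f₀ : ℝ → ℝ) (hf₀_nonneg : ∀ v, 0 ≤ f₀ v) (hf₀_int : Integrable f₀)
    (hf₀_mass : ∫ v, f₀ v = 1) (hf₀_even : ∀ v, f₀ (-v) = f₀ v)
    (hf₀_energy_int : Integrable (fun v : ℝ => v ^ 2 * f₀ v))
    (hf₀_energy : ∫ v : ℝ, v ^ 2 * f₀ v = 1)
    -- the solutions f_ε of the dissipative Kac equations with initial datum f₀
    (fε : ℝ → ℝ → ℝ → ℝ)
    (hfε_nonneg : ∀ ε > (0 : ℝ), ∀ v, ∀ t ∈ Ici (0 : ℝ), 0 ≤ fε ε v t)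
    (hfε_int : ∀ ε > (0 : ℝ), ∀ t ∈ Ici (0 : ℝ), Integrable (fun v => fε ε v t))
    (hfε_init : ∀ ε > (0 : ℝ), ∀ v, fε ε v 0 = f₀ v)
    (hfε_eq : ∀ ε > (0 : ℝ), ∀ ξ : ℝ, ∀ t ∈ Ici (0 : ℝ),
      HasDerivWithinAt (fun s => ftEven (fun v => fε ε v s) ξ)
        (2 * ∫ θ in (0 : ℝ)..(π / 2), b ε θ *
          (ftEven (fun v => fε ε v t) (ξ * Real.cos θ ^ (p + 1)) *
            ftEven (fun v => fε ε v t) (ξ * Real.sin θ ^ (p + 1)) -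
            ftEven (fun v => fε ε v t) ξ))
        (Ici 0) t) :
    -- conclusion: lim_{ε→0} sup_{t≥0, ξ≠0} |f̂_ε(ξ,t) - f̂₀(ξe^{-(p+1)t})|/|ξ|² = 0
    ∀ lam > (0 : ℝ), ∃ εbar > (0 : ℝ), ∀ ε, 0 < ε → ε < εbar →
      ∀ t ∈ Ici (0 : ℝ), ∀ ξ : ℝ, ξ ≠ 0 →
        |ftEven (fun v => fε ε v t) ξ -
          ftEven f₀ (ξ * Real.exp (-(p + 1) * t))| / |ξ| ^ 2 < lam := by
  intro lam hlam
  obtain ⟨φ', hφd, hφ'0, hφL⟩ := exists_deriv_ftEven hf₀_nonneg hf₀_int hf₀_energy_int hf₀_energy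
  have hT := taylor_of_lipschitz_deriv hφd hφL
  have hφ00 : ftEven f₀ 0 = 1 := by rw [ftEven_zero, hf₀_mass]
  have hφ1 : ∀ y, |ftEven f₀ y| ≤ 1 := abs_ftEven_le_one hf₀_int hf₀_nonneg hφ00
  have hφ'1 : ∀ y, |φ' y| ≤ |y| := fun y => by simpa [hφ'0] using hφL 0 y
  have hφ0 : ∀ y, |1 - ftEven f₀ y| ≤ y ^ 2 := fun y => by
    rw [abs_sub_comm]
    simpa [hφ'0, hφ00] using hT 0 y
  -- The limit holds with rate `6 η`, where `η` bounds `sin^p θ` on the support of `b ε`.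
  obtain ⟨η, hη0, hη, hηlam⟩ : ∃ η : ℝ, 0 < η ∧ η ≤ 1 / 2 ∧ 6 * η < lam :=
    ⟨min (1 / 2) (lam / 12), by positivity, min_le_left _ _, by
      linarith [min_le_right (1 / 2) (lam / 12)]⟩
  have hev : ∀ᶠ ε in 𝓝[>] (0 : ℝ), d ε < η ^ (1 / p) :=
    hd_lim.eventually_lt_const (Real.rpow_pos_of_pos hη0 _)
  obtain ⟨εbar, hεbar, hd⟩ := (nhdsGT_basis (0 : ℝ)).eventually_iff.1 hev
  refine ⟨εbar, hεbar, fun ε hε hεlt t₀ ht₀ ξ₀ hξ₀ => ?_⟩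
  have hdε : d ε < η ^ (1 / p) := hd ⟨hε, hεlt⟩
  have hπ := Real.pi_pos
  have hsmall : ∀ θ ∈ Icc 0 (π / 2), b ε θ ≠ 0 → Real.sin θ ^ p ≤ η := by
    intro θ hθ hb
    have h1 : θ ≤ η ^ (1 / p) := by
      have := (hsupp ε hε θ hb).2
      rw [abs_of_nonneg hθ.1] at this
      linarith
    have h2 : Real.sin θ ≤ η ^ (1 / p) := (Real.sin_le hθ.1).trans h1
    have h3 : 0 ≤ Real.sin θ := Real.sin_nonneg_of_nonneg_of_le_pi hθ.1 (by linarith [hθ.2])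
    calc Real.sin θ ^ p ≤ (η ^ (1 / p)) ^ p := Real.rpow_le_rpow h3 h2 hp.le
      _ = η := by rw [← Real.rpow_mul hη0.le, one_div_mul_cancel hp.ne', Real.rpow_one]
  have hbI : IntervalIntegrable (b ε) volume 0 (π / 2) := by
    rw [intervalIntegrable_iff_integrableOn_Icc_of_le (by positivity)]
    exact (hb_int ε hε).mono_set (Icc_subset_Icc (by linarith) le_rfl)
  have hbc : ∀ g : ℝ → ℝ, Continuous g →
      IntervalIntegrable (fun θ => b ε θ * g θ) volume 0 (π / 2) := fun g hg =>
    hbI.mul_continuousOn hg.continuousOn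
  have hcosc : Continuous fun θ : ℝ => Real.cos θ ^ (p + 1) :=
    Real.continuous_cos.rpow_const fun _ => Or.inr (by linarith)
  have hsinc : Continuous fun θ : ℝ => Real.sin θ ^ (p + 1) :=
    Real.continuous_sin.rpow_const fun _ => Or.inr (by linarith)
  set B : ℝ := ∫ θ in (0 : ℝ)..(π / 2), b ε θ with hB
  have hB0 : 0 ≤ B := intervalIntegral.integral_nonneg (by positivity)
    fun θ _ => hb_nonneg ε hε θ
  set u : ℝ → ℝ → ℝ := fun ξ t => ftEven (fun v => fε ε v t) ξ with hu
  have huc : ∀ t ∈ Ici (0 : ℝ), Continuous fun ξ => u ξ t := fun t ht =>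
    continuous_ftEven (hfε_int ε hε t ht)
  have hu0 : ∀ ξ, u ξ 0 = ftEven f₀ ξ := fun ξ => by
    simp only [hu]
    congr 1
    funext v
    exact hfε_init ε hε v
  have hmass : ∀ t ∈ Ici (0 : ℝ), u 0 t = 1 := by
    refine eq_one_of_logistic (m := fun t => u 0 t) (B := B) ((hu0 0).trans hφ00)
      fun t ht => ?_
    refine (hfε_eq ε hε 0 t ht).congr_deriv ?_
    simp only [zero_mul, intervalIntegral.integral_mul_const, hB, hu]
  have hu1 : ∀ t ∈ Ici (0 : ℝ), ∀ ξ, |u ξ t| ≤ 1 := fun t ht =>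
    abs_ftEven_le_one (hfε_int ε hε t ht) (fun v => hfε_nonneg ε hε v t ht) (hmass t ht)
  set E : ℝ → ℝ := fun t => Real.exp (-(p + 1) * t) with hE
  have hE1 : ∀ t ∈ Ici (0 : ℝ), E t ≤ 1 := fun t ht => by
    rw [hE]
    exact Real.exp_le_one_iff.2 (mul_nonpos_of_nonpos_of_nonneg (by linarith) ht)
  have hwd : ∀ ξ t, HasDerivAt (fun t => ftEven f₀ (ξ * E t))
      (-(p + 1) * (ξ * E t * φ' (ξ * E t))) t := by
    intro ξ t
    have h1 : HasDerivAt (fun t => ξ * E t) (ξ * (E t * -(p + 1))) t := by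
      have h2 := ((hasDerivAt_id t).const_mul (-(p + 1))).exp
      simpa [hE] using h2.const_mul ξ
    refine ((hφd _).comp t h1).congr_deriv ?_
    ring
  -- Picard iteration: the trivial bound `2` is improved to the remainder of an exponential series.
  have hiter : ∀ n : ℕ, ∀ ξ, ∀ t ∈ Ici (0 : ℝ), |u ξ t - ftEven f₀ (ξ * E t)| ≤
      6 * η * ξ ^ 2 + 2 * ((2 * (2 * B) * t) ^ n / n.factorial) := by
    intro n
    induction n with
    | zero =>
      intro ξ t ht
      have h1 := abs_sub (u ξ t) (ftEven f₀ (ξ * E t))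
      have h2 := hu1 t ht ξ
      have h3 := hφ1 (ξ * E t)
      have h4 : 0 ≤ 6 * η * ξ ^ 2 := by positivity
      simp only [pow_zero, Nat.factorial_zero, Nat.cast_one, div_one]
      linarith
    | succ n ih =>
      intro ξ
      refine abs_le_of_relaxation_step (y := fun t => u ξ t - ftEven f₀ (ξ * E t)) n
        (by positivity) (by positivity)
        (fun t ht => (hfε_eq ε hε ξ t ht).sub (hwd ξ t).hasDerivWithinAt) ?_ fun t ht => ?_
      · simp [hu0, hE]
      set M := 2 * ((2 * (2 * B) * t) ^ n / n.factorial) with hM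
      set G : ℝ → ℝ := fun θ => u (ξ * Real.cos θ ^ (p + 1)) t * u (ξ * Real.sin θ ^ (p + 1)) t
        - ftEven f₀ (ξ * E t) + (p + 1) / 2 * Real.sin θ ^ 2 * (ξ * E t * φ' (ξ * E t)) with hG
      have hGb : |∫ θ in (0 : ℝ)..(π / 2), b ε θ * G θ| ≤ B * (6 * η * ξ ^ 2 + 2 * M) := by
        rw [hB, ← intervalIntegral.integral_mul_const, ← Real.norm_eq_abs]
        refine intervalIntegral.norm_integral_le_of_norm_le (by positivity)
          (ae_of_all _ fun θ hθ => ?_) (hbI.mul_const _)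
        have hθ' : θ ∈ Icc 0 (π / 2) := ⟨hθ.1.le, hθ.2⟩
        by_cases hbθ : b ε θ = 0
        · simp [hbθ]
        rw [Real.norm_eq_abs, abs_mul, abs_of_nonneg (hb_nonneg ε hε θ)]
        refine mul_le_mul_of_nonneg_left ?_ (hb_nonneg ε hε θ)
        obtain ⟨a1, a2, a3, a4⟩ := angle_bounds hp hp1 hθ' hη (hsmall θ hθ' hbθ)
        exact collision_integrand_bound hφ1 hφ'1 hT hφ0 (Real.exp_pos _).le (hE1 t ht) hη0.le
          (sq_nonneg _) a1 a2 a3 a4 (hu1 t ht _) (ih _ t ht) (ih _ t ht)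
      -- The normalisation `∫ b sin² = 1` lets the drift term be moved under the integral.
      have hsplit : ∫ θ in (0 : ℝ)..(π / 2), b ε θ * G θ =
          (∫ θ in (0 : ℝ)..(π / 2), b ε θ *
            (u (ξ * Real.cos θ ^ (p + 1)) t * u (ξ * Real.sin θ ^ (p + 1)) t - u ξ t))
          + B * (u ξ t - ftEven f₀ (ξ * E t))
          + (p + 1) / 2 * (ξ * E t * φ' (ξ * E t)) := by
        have i1 := hbc (fun θ =>
          u (ξ * Real.cos θ ^ (p + 1)) t * u (ξ * Real.sin θ ^ (p + 1)) t - u ξ t)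
          ((((huc t ht).comp (hcosc.const_mul ξ)).mul
            ((huc t ht).comp (hsinc.const_mul ξ))).sub continuous_const)
        have i2 := hbI.mul_const (u ξ t - ftEven f₀ (ξ * E t))
        have i3 := (hbc (fun θ => Real.sin θ ^ 2) (by fun_prop)).mul_const
          ((p + 1) / 2 * (ξ * E t * φ' (ξ * E t)))
        have h1 : ∀ θ, b ε θ * G θ = b ε θ *
            (u (ξ * Real.cos θ ^ (p + 1)) t * u (ξ * Real.sin θ ^ (p + 1)) t - u ξ t)
            + b ε θ * (u ξ t - ftEven f₀ (ξ * E t))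
            + b ε θ * Real.sin θ ^ 2 * ((p + 1) / 2 * (ξ * E t * φ' (ξ * E t))) := fun θ => by
          simp only [hG]; ring
        simp_rw [h1]
        rw [intervalIntegral.integral_add (i1.add i2) i3, intervalIntegral.integral_add i1 i2,
          intervalIntegral.integral_mul_const, intervalIntegral.integral_mul_const,
          hb_norm ε hε, one_mul]
      rw [hsplit] at hGb
      have h2 := mul_le_mul_of_nonneg_left hGb (zero_le_two (α := ℝ))
      rw [← abs_two, ← abs_mul, abs_two] at h2
      refine le_trans (le_of_eq ?_) (h2.trans (le_of_eq ?_))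
      · congr 1
        simp only [hu]
        ring
      · ring
  have hlim : |u ξ₀ t₀ - ftEven f₀ (ξ₀ * E t₀)| ≤ 6 * η * ξ₀ ^ 2 := by
    refine ge_of_tendsto' (f := fun n : ℕ => 6 * η * ξ₀ ^ 2 +
      2 * ((2 * (2 * B) * t₀) ^ n / n.factorial)) (x := atTop) ?_ fun n => hiter n ξ₀ t₀ ht₀
    simpa using ((FloorSemiring.tendsto_pow_div_factorial_atTop (2 * (2 * B) * t₀)).const_mul
      2).const_add (6 * η * ξ₀ ^ 2)
  rw [sq_abs, div_lt_iff₀ (by positivity)]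
  refine hlim.trans_lt ?_
  gcongr

end
end

section
/- Let 0 < p ≤ 1 and α > 0, and let f₀ ≥ 0 be a probability density on ℝ. Let f(·,t) be the solution of the fractional Fokker–Planck equation ∂ₜ f̂(ξ,t) = −2α|ξ|^{2/(p+1)} f̂(ξ,t) − (p+1) ξ ∂_ξ f̂(ξ,t) with initial datum f₀, given explicitly by f(v,t) = (1/β(t)) f₀(·/β(t)) ∗ (1/γ(t)) M_p(·/γ(t)) (v) with β(t) = e^{−(p+1)t} and γ(t) = (1 − e^{−2t})^{(p+1)/2}, where M_p is the probability density with Fourier transform M̂_p(ξ) = e^{−α|ξ|^{2/(p+1)}}. Then lim_{t→+∞} ‖f(·,t) − M_p‖_{L¹(ℝ)} = 0. -/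
/-!
The solution is `f₀` dilated by `β(t) → 0`, convolved with `M_p` dilated by `γ(t) → 1`, and the
convergence only uses that `f₀` is a probability density and `M_p` is integrable.
Writing `Φ(a, c)` for the `L¹` distance between `M_p` and the density `v ↦ c⁻¹ M_p((v - a) / c)`, Fubini and the change of variables
`s = β u` give
`‖f(·,t) - M_p‖₁ ≤ ∫ f₀(u) Φ(β(t) u, γ(t)) du` (`convolution_dist_le`, `dilated_convolution_dist_le`).
Translations and dilations act continuously on `L¹`, so `Φ → 0` at `(0, 1)` (`tendsto_affineDist`:
approximate by a continuous compactly supported function, for which dominated convergence applies).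
As `Φ ≤ 2 ‖M_p‖₁`, dominated convergence with majorant `2 ‖M_p‖₁ f₀` finishes the proof.
-/

open Real MeasureTheory Set Filter Topology

noncomputable section

/-- Fourier transform `f̂(ξ) = ∫ e^{-iξv} f(v) dv` of a real density. -/
def ftC (f : ℝ → ℝ) (ξ : ℝ) : ℂ :=
  ∫ v : ℝ, Complex.exp (-(Complex.I * (ξ : ℂ) * (v : ℂ))) * (f v : ℂ)

/-- The explicit solution of the fractional Fokker–Planck equation:
`f(v,t) = (1/β(t)) f₀(·/β(t)) ∗ (1/γ(t)) M_p(·/γ(t)) (v)` with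
`β(t) = e^{-(p+1)t}` and `γ(t) = (1-e^{-2t})^{(p+1)/2}`. -/
def FPsolution (p : ℝ) (f₀ Mp : ℝ → ℝ) (v t : ℝ) : ℝ :=
  ∫ w : ℝ, (Real.exp (-(p + 1) * t))⁻¹ * f₀ ((v - w) / Real.exp (-(p + 1) * t)) *
    (((1 - Real.exp (-2 * t)) ^ ((p + 1) / 2))⁻¹ *
      Mp (w / (1 - Real.exp (-2 * t)) ^ ((p + 1) / 2)))

/-- The `L¹` distance between `f` and its push-forward density `v ↦ c⁻¹ f ((v - a) / c)` under the
affine map `x ↦ c x + a`, meaningful for `c > 0`. -/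
def affineDist (f : ℝ → ℝ) (a c : ℝ) : ℝ :=
  ∫ v : ℝ, |c⁻¹ * f ((v - a) / c) - f v|

theorem integrable_affine {f : ℝ → ℝ} (hf : Integrable f) (a : ℝ) {c : ℝ} (hc : 0 < c) :
    Integrable (fun v => c⁻¹ * f ((v - a) / c)) :=
  ((hf.comp_div hc.ne').comp_sub_right a).const_mul _

theorem integral_affine (f : ℝ → ℝ) (a : ℝ) {c : ℝ} (hc : 0 < c) :
    ∫ v, c⁻¹ * f ((v - a) / c) = ∫ v, f v := by
  rw [integral_sub_right_eq_self (fun v => c⁻¹ * f (v / c)) a, integral_const_mul,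
    Measure.integral_comp_div, abs_of_pos hc, smul_eq_mul, inv_mul_cancel_left₀ hc.ne']

theorem integral_abs_affine (f : ℝ → ℝ) (a : ℝ) {c : ℝ} (hc : 0 < c) :
    ∫ v, |c⁻¹ * f ((v - a) / c)| = ∫ v, |f v| := by
  rw [← integral_affine (fun v => |f v|) a hc]
  simp only [abs_mul, abs_of_pos (inv_pos.2 hc)]

theorem affineDist_nonneg (f : ℝ → ℝ) (a c : ℝ) : 0 ≤ affineDist f a c :=
  integral_nonneg fun _ => abs_nonneg _

theorem affineDist_le {f : ℝ → ℝ} (hf : Integrable f) (a : ℝ) {c : ℝ} (hc : 0 < c) :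
    affineDist f a c ≤ 2 * ∫ v, |f v| := by
  calc affineDist f a c
      ≤ ∫ v, (|c⁻¹ * f ((v - a) / c)| + |f v|) :=
        integral_mono ((integrable_affine hf a hc).sub hf).abs
          ((integrable_affine hf a hc).abs.add hf.abs) fun v => abs_sub _ _
    _ = 2 * ∫ v, |f v| := by
        rw [integral_add (integrable_affine hf a hc).abs hf.abs, integral_abs_affine f a hc]
        ring

/-- Replacing `f` by `g` changes the affine distance by at most `2 ‖f - g‖₁`, because
`v ↦ c⁻¹ f ((v - a) / c)` depends isometrically on `f` in `L¹`. -/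
theorem affineDist_le_add {f g : ℝ → ℝ} (hf : Integrable f) (hg : Integrable g) (a : ℝ) {c : ℝ}
    (hc : 0 < c) : affineDist f a c ≤ 2 * (∫ v, |f v - g v|) + affineDist g a c := by
  have hfg : Integrable (fun v => f v - g v) := hf.sub hg
  have h1 : Integrable (fun v => c⁻¹ * f ((v - a) / c) - f v) := (integrable_affine hf a hc).sub hf
  have h2 : Integrable (fun v => c⁻¹ * g ((v - a) / c) - g v) := (integrable_affine hg a hc).sub hg
  have h3 : Integrable (fun v => c⁻¹ * (f ((v - a) / c) - g ((v - a) / c)) - (f v - g v)) :=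
    (integrable_affine hfg a hc).sub hfg
  calc affineDist f a c
      ≤ ∫ v, (|c⁻¹ * (f ((v - a) / c) - g ((v - a) / c)) - (f v - g v)|
          + |c⁻¹ * g ((v - a) / c) - g v|) := by
        refine integral_mono h1.abs (h3.abs.add h2.abs) fun v => ?_
        refine le_trans (le_of_eq ?_) (abs_add_le _ _)
        congr 1
        ring
    _ = affineDist (fun v => f v - g v) a c + affineDist g a c := integral_add h3.abs h2.abs
    _ ≤ _ := by gcongr; exact affineDist_le hfg a hc

theorem tendsto_affineDist_of_compactSupport {g : ℝ → ℝ} (hg : Continuous g)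
    (hs : HasCompactSupport g) :
    Tendsto (fun q : ℝ × ℝ => affineDist g q.1 q.2) (𝓝 (0, 1)) (𝓝 0) := by
  obtain ⟨C, hC⟩ := hs.exists_bound_of_continuous hg
  obtain ⟨R, hR⟩ := hs.isCompact.isBounded.subset_closedBall (0 : ℝ)
  have hzero : ∀ x, R < |x| → g x = 0 := fun x hx => by
    by_contra h
    have := hR (subset_tsupport g h)
    rw [mem_closedBall_zero_iff, Real.norm_eq_abs] at this
    linarith
  have hC0 : 0 ≤ C := (norm_nonneg _).trans (hC 0)
  have hint : Integrable g := hg.integrable_of_hasCompactSupport hs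
  -- for `|a| < 1` and `1/2 < c < 2` all the densities live in `[-(2R+1), 2R+1]`
  have hnear : ∀ᶠ q : ℝ × ℝ in 𝓝 (0, 1), |q.1| < 1 ∧ 1 / 2 < q.2 ∧ q.2 < 2 := by
    refine ((continuous_fst.abs.tendsto _).eventually_lt_const (by norm_num)).and
      (((continuous_snd.tendsto _).eventually_const_lt (by norm_num)).and
        ((continuous_snd.tendsto _).eventually_lt_const (by norm_num)))
  have key : Tendsto (fun q : ℝ × ℝ => ∫ v : ℝ, |q.2⁻¹ * g ((v - q.1) / q.2) - g v|)
      (𝓝 (0, 1)) (𝓝 (∫ _ : ℝ, (0 : ℝ))) := by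
    refine tendsto_integral_filter_of_dominated_convergence
      (fun v => (Icc (-(2 * R + 1)) (2 * R + 1)).indicator (fun _ => 2 * C) v + |g v|)
      ?_ ?_ ?_ ?_
    · refine Eventually.of_forall fun q => Continuous.aestronglyMeasurable ?_
      fun_prop
    · filter_upwards [hnear] with q hq
      refine Eventually.of_forall fun v => ?_
      obtain ⟨h1, h2, h3⟩ := hq
      have hq0 : 0 < q.2 := by linarith
      rw [Real.norm_eq_abs, abs_abs]
      refine (abs_sub _ _).trans (add_le_add_left ?_ _)
      by_cases hv : v ∈ Icc (-(2 * R + 1)) (2 * R + 1)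
      · rw [indicator_of_mem hv, abs_mul, abs_of_pos (inv_pos.2 hq0)]
        have : q.2⁻¹ ≤ 2 := by
          rw [inv_le_comm₀ hq0 two_pos]
          linarith
        exact mul_le_mul this (hC _) (abs_nonneg _) two_pos.le
      · rw [indicator_of_notMem hv, hzero _ ?_]
        · simp
        · rw [abs_div, abs_of_pos hq0, lt_div_iff₀ hq0]
          have h4 : 2 * R + 1 < |v| := by
            by_contra! h
            exact hv (abs_le.1 h)
          have h5 := abs_sub_abs_le_abs_sub v q.1
          rcases le_or_gt 0 R with hR0 | hR0
          · nlinarith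
          · nlinarith [abs_nonneg (v - q.1)]
    · exact ((integrable_indicator_iff measurableSet_Icc).2
        (integrableOn_const (by simp))).add hint.abs
    · refine Eventually.of_forall fun v => ?_
      have hcont : ContinuousAt (fun q : ℝ × ℝ => |q.2⁻¹ * g ((v - q.1) / q.2) - g v|) (0, 1) := by
        have h1 : ContinuousAt (fun q : ℝ × ℝ => q.2⁻¹) (0, 1) :=
          continuousAt_snd.inv₀ one_ne_zero
        have h2 : ContinuousAt (fun q : ℝ × ℝ => (v - q.1) / q.2) (0, 1) :=
          (continuousAt_const.sub continuousAt_fst).div continuousAt_snd one_ne_zero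
        exact ((h1.mul (hg.continuousAt.comp h2)).sub continuousAt_const).abs
      simpa using hcont.tendsto
  simpa [affineDist] using key

theorem tendsto_affineDist {f : ℝ → ℝ} (hf : Integrable f) :
    Tendsto (fun q : ℝ × ℝ => affineDist f q.1 q.2) (𝓝 (0, 1)) (𝓝 0) := by
  rw [Metric.tendsto_nhds]
  intro ε hε
  obtain ⟨g, hgs, hfg, hgc, hgi⟩ :=
    hf.exists_hasCompactSupport_integral_sub_le (ε := ε / 4) (by positivity)
  have hpos : ∀ᶠ q : ℝ × ℝ in 𝓝 (0, 1), 0 < q.2 :=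
    (continuous_snd.tendsto _).eventually_const_lt one_pos
  filter_upwards [hpos, (tendsto_affineDist_of_compactSupport hgc hgs).eventually_lt_const
    (half_pos hε)] with q hq hlt
  simp only [Real.norm_eq_abs] at hfg
  rw [Real.dist_eq, sub_zero, abs_of_nonneg (affineDist_nonneg _ _ _)]
  linarith [affineDist_le_add hf hgi q.1 hq]

/-- If `h` is a probability density, `h ∗ N - M` is the `h`-average of the functions `N(· - s) - M`,
so its `L¹` norm is at most the `h`-average of their `L¹` norms. The first conjunct records that
this average is an honest integral. -/
theorem convolution_dist_le {h N M : ℝ → ℝ} (hh0 : ∀ s, 0 ≤ h s) (hh : Integrable h)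
    (hmass : ∫ s, h s = 1) (hN : Integrable N) (hM : Integrable M) :
    Integrable (fun s => h s * ∫ v, |N (v - s) - M v|) ∧
    ∫ v, |(∫ w, h (v - w) * N w) - M v| ≤ ∫ s, h s * ∫ v, |N (v - s) - M v| := by
  have hA : Integrable (fun z : ℝ × ℝ => h z.2 * N (z.1 - z.2)) (volume.prod volume) := by
    simpa using hh.convolution_integrand (ContinuousLinearMap.mul ℝ ℝ) hN
  have hB : Integrable (fun z : ℝ × ℝ => h z.2 * M z.1) (volume.prod volume) := by
    simpa [mul_comm] using hM.mul_prod hh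
  have hD : Integrable (fun z : ℝ × ℝ => |h z.2 * N (z.1 - z.2) - h z.2 * M z.1|)
      (volume.prod volume) := (hA.sub hB).abs
  have hinner : ∀ s, ∫ v, |h s * N (v - s) - h s * M v| = h s * ∫ v, |N (v - s) - M v| := by
    intro s
    rw [← integral_const_mul]
    simp only [← mul_sub, abs_mul, abs_of_nonneg (hh0 s)]
  have hae : ∀ᵐ v, |(∫ w, h (v - w) * N w) - M v|
      ≤ ∫ s, |h s * N (v - s) - h s * M v| := by
    filter_upwards [hA.prod_right_ae, hB.prod_right_ae] with v hv1 hv2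
    have e1 : ∫ w, h (v - w) * N w = ∫ s, h s * N (v - s) := by
      rw [← integral_sub_left_eq_self (fun s => h s * N (v - s)) volume v]
      simp
    have e2 : M v = ∫ s, h s * M v := by rw [integral_mul_const, hmass, one_mul]
    rw [e1]
    nth_rewrite 1 [e2]
    rw [← integral_sub hv1 hv2]
    exact abs_integral_le_integral_abs
  refine ⟨by simpa only [hinner] using hD.integral_prod_right, ?_⟩
  calc ∫ v, |(∫ w, h (v - w) * N w) - M v|
      ≤ ∫ v, ∫ s, |h s * N (v - s) - h s * M v| :=
        integral_mono_of_nonneg (Eventually.of_forall fun _ => abs_nonneg _)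
          hD.integral_prod_left hae
    _ = ∫ s, ∫ v, |h s * N (v - s) - h s * M v| := integral_integral_swap hD
    _ = _ := by simp only [hinner]

/-- `convolution_dist_le` for the dilations by `b` and `c`, after the substitution `s = b u`. -/
theorem dilated_convolution_dist_le {f M : ℝ → ℝ} (hf0 : ∀ s, 0 ≤ f s) (hf : Integrable f)
    (hmass : ∫ s, f s = 1) (hM : Integrable M) {b c : ℝ} (hb : 0 < b) (hc : 0 < c) :
    Integrable (fun u => f u * affineDist M (b * u) c) ∧
    ∫ v, |(∫ w, b⁻¹ * f ((v - w) / b) * (c⁻¹ * M (w / c))) - M v|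
      ≤ ∫ u, f u * affineDist M (b * u) c := by
  obtain ⟨h1, h2⟩ := convolution_dist_le (h := fun s => b⁻¹ * f (s / b))
    (N := fun w => c⁻¹ * M (w / c)) (M := M)
    (fun s => mul_nonneg (inv_pos.2 hb).le (hf0 _))
    (by simpa using integrable_affine hf 0 hb)
    (by simpa [hmass] using integral_affine f 0 hb)
    (by simpa using integrable_affine hM 0 hc) hM
  have e : ∀ u, b * (b⁻¹ * f (b * u / b) * ∫ v, |c⁻¹ * M ((v - b * u) / c) - M v|)
      = f u * affineDist M (b * u) c := by
    intro u
    rw [mul_div_cancel_left₀ _ hb.ne', affineDist]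
    field_simp
  constructor
  · simpa only [e] using (h1.comp_mul_left' hb.ne').const_mul b
  · refine h2.trans (le_of_eq ?_)
    simp only [← e]
    rw [integral_const_mul, Measure.integral_comp_mul_left
      (fun s => b⁻¹ * f (s / b) * ∫ v, |c⁻¹ * M ((v - s) / c) - M v|),
      abs_of_pos (inv_pos.2 hb), smul_eq_mul, mul_inv_cancel_left₀ hb.ne']

/-- Any solution of the fractional Fokker–Planck equation issued from a
probability density converges in `L¹(ℝ)` to the Lévy-type Maxwellian `M_p`. -/
theorem FP_L1_convergence_to_maxwellian
    (p α : ℝ) (hp : 0 < p) (hp1 : p ≤ 1) (hα : 0 < α)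
    -- the Maxwellian equilibrium M_p
    (Mp : ℝ → ℝ) (hMp_nonneg : ∀ v, 0 ≤ Mp v) (hMp_int : Integrable Mp)
    (hMp_mass : ∫ v, Mp v = 1)
    (hMp_ft : ∀ ξ : ℝ, ftC Mp ξ = (Real.exp (-α * |ξ| ^ (2 / (p + 1))) : ℂ))
    -- the initial probability density f₀
    (f₀ : ℝ → ℝ) (hf₀_nonneg : ∀ v, 0 ≤ f₀ v) (hf₀_int : Integrable f₀)
    (hf₀_mass : ∫ v, f₀ v = 1) :
    Tendsto (fun t : ℝ => ∫ v : ℝ, |FPsolution p f₀ Mp v t - Mp v|)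
      atTop (𝓝 0) := by
  set β : ℝ → ℝ := fun t => Real.exp (-(p + 1) * t) with hβ
  set γ : ℝ → ℝ := fun t => (1 - Real.exp (-2 * t)) ^ ((p + 1) / 2) with hγ
  have hβ0 : ∀ t, 0 < β t := fun t => Real.exp_pos _
  have hγ0 : ∀ t, 0 < t → 0 < γ t := fun t ht =>
    Real.rpow_pos_of_pos (sub_pos.2 (Real.exp_lt_one_iff.2 (by linarith))) _
  have hβlim : Tendsto β atTop (𝓝 0) :=
    Real.tendsto_exp_atBot.comp (tendsto_id.const_mul_atTop_of_neg (by linarith))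
  have hγlim : Tendsto γ atTop (𝓝 1) := by
    have h1 : Tendsto (fun t : ℝ => 1 - Real.exp (-2 * t)) atTop (𝓝 (1 - 0)) :=
      tendsto_const_nhds.sub
        (Real.tendsto_exp_atBot.comp (tendsto_id.const_mul_atTop_of_neg (by norm_num)))
    rw [sub_zero] at h1
    simpa [hγ] using h1.rpow_const (p := (p + 1) / 2) (Or.inl one_ne_zero)
  have hmain : ∀ t, 0 < t → Integrable (fun u => f₀ u * affineDist Mp (β t * u) (γ t)) ∧
      ∫ v, |FPsolution p f₀ Mp v t - Mp v| ≤ ∫ u, f₀ u * affineDist Mp (β t * u) (γ t) :=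
    fun t ht => dilated_convolution_dist_le hf₀_nonneg hf₀_int hf₀_mass hMp_int (hβ0 t) (hγ0 t ht)
  have hlim : Tendsto (fun t => ∫ u, f₀ u * affineDist Mp (β t * u) (γ t)) atTop
      (𝓝 (∫ _ : ℝ, (0 : ℝ))) := by
    refine tendsto_integral_filter_of_dominated_convergence
      (fun u => f₀ u * (2 * ∫ v, |Mp v|)) ?_ ?_ (hf₀_int.mul_const _) ?_
    · filter_upwards [eventually_gt_atTop 0] with t ht
      exact (hmain t ht).1.aestronglyMeasurable
    · filter_upwards [eventually_gt_atTop 0] with t ht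
      refine Eventually.of_forall fun u => ?_
      rw [Real.norm_eq_abs,
        abs_of_nonneg (mul_nonneg (hf₀_nonneg u) (affineDist_nonneg _ _ _))]
      exact mul_le_mul_of_nonneg_left (affineDist_le hMp_int _ (hγ0 t ht)) (hf₀_nonneg u)
    · refine Eventually.of_forall fun u => ?_
      have h1 : Tendsto (fun t => (β t * u, γ t)) atTop (𝓝 (0, 1)) := by
        simpa using (hβlim.mul_const u).prodMk_nhds hγlim
      simpa using ((tendsto_affineDist hMp_int).comp h1).const_mul (f₀ u)
  rw [integral_zero] at hlim
  refine tendsto_of_tendsto_of_tendsto_of_le_of_le' tendsto_const_nhds hlim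
    (Eventually.of_forall fun t => integral_nonneg fun _ => abs_nonneg _) ?_
  filter_upwards [eventually_gt_atTop 0] with t ht
  exact (hmain t ht).2

end
end

section
/- Let 0 < p ≤ 1, α > 0, and b ∈ L¹([−π/2, π/2]). Then the Maxwellian M̂_p(ξ) = exp(−α|ξ|^{2/(p+1)}) is a stationary state of the dissipative Kac collision operator in Fourier variables: for every ξ ∈ ℝ, ∫_{−π/2}^{π/2} b(θ) [M̂_p(ξ cosθ|cosθ|^p) M̂_p(ξ sinθ|sinθ|^p) − M̂_p(ξ)] dθ = 0. In particular, for all θ and ξ, |ξ cosθ|cosθ|^p|^{2/(p+1)} + |ξ sinθ|sinθ|^p|^{2/(p+1)} = |ξ|^{2/(p+1)} and hence M̂_p(ξ cosθ|cosθ|^p) M̂_p(ξ sinθ|sinθ|^p) = M̂_p(ξ). -/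
/-!
Since `|c |c|^p| = |c|^{p+1}`, raising `|ξ c |c|^p|` to the power `2/(p+1)` gives
`|ξ|^{2/(p+1)} c²` (`abs_collision_rpow`). For `c = cos θ` and `c = sin θ` these add up to
`|ξ|^{2/(p+1)}`, so the exponentials multiply to `M̂_p(ξ)` and the collision integrand
vanishes identically.
-/

open Real MeasureTheory Set

noncomputable section

/-- The Lévy-type Maxwellian in Fourier variables: `M̂_p(ξ) = exp(-α|ξ|^{2/(p+1)})`. -/
def Mhat (p α ξ : ℝ) : ℝ := Real.exp (-α * |ξ| ^ (2 / (p + 1)))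

/-- The collision rule scales `|ξ|^{2/(p+1)}` exactly by `c²`: since `|c |c|^p| = |c|^{p+1}`,
the exponent `2/(p+1)` cancels the inelasticity. -/
lemma abs_collision_rpow {p : ℝ} (hp : 0 < p) (c ξ : ℝ) :
    |ξ * (c * |c| ^ p)| ^ (2 / (p + 1)) = |ξ| ^ (2 / (p + 1)) * c ^ 2 := by
  have h : |c * |c| ^ p| = |c| ^ (p + 1) := by
    rw [abs_mul, abs_of_nonneg (rpow_nonneg (abs_nonneg c) p),
      Real.rpow_add_one' (abs_nonneg c) (by linarith), mul_comm]
  rw [abs_mul, h, Real.mul_rpow (abs_nonneg _) (rpow_nonneg (abs_nonneg c) _),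
    ← Real.rpow_mul (abs_nonneg c), mul_div_cancel₀ _ (by linarith), Real.rpow_two, sq_abs]

/-- The Maxwellian `M̂_p` is a stationary state of the dissipative Kac collision
operator in Fourier variables, together with the underlying pointwise identities. -/
theorem maxwellian_is_stationary
    (p α : ℝ) (hp : 0 < p) (hp1 : p ≤ 1) (hα : 0 < α)
    (b : ℝ → ℝ) (hb_int : IntegrableOn b (Icc (-(π / 2)) (π / 2))) :
    (∀ ξ : ℝ, ∫ θ in (-(π / 2))..(π / 2), b θ *
      (Mhat p α (ξ * (Real.cos θ * |Real.cos θ| ^ p)) *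
        Mhat p α (ξ * (Real.sin θ * |Real.sin θ| ^ p)) - Mhat p α ξ) = 0) ∧
    (∀ θ ξ : ℝ, |ξ * (Real.cos θ * |Real.cos θ| ^ p)| ^ (2 / (p + 1)) +
      |ξ * (Real.sin θ * |Real.sin θ| ^ p)| ^ (2 / (p + 1)) = |ξ| ^ (2 / (p + 1))) ∧
    (∀ θ ξ : ℝ, Mhat p α (ξ * (Real.cos θ * |Real.cos θ| ^ p)) *
      Mhat p α (ξ * (Real.sin θ * |Real.sin θ| ^ p)) = Mhat p α ξ) := by
  have key : ∀ θ ξ : ℝ, |ξ * (Real.cos θ * |Real.cos θ| ^ p)| ^ (2 / (p + 1)) +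
      |ξ * (Real.sin θ * |Real.sin θ| ^ p)| ^ (2 / (p + 1)) = |ξ| ^ (2 / (p + 1)) := by
    intro θ ξ
    rw [abs_collision_rpow hp, abs_collision_rpow hp, ← mul_add, Real.cos_sq_add_sin_sq, mul_one]
  have prod : ∀ θ ξ : ℝ, Mhat p α (ξ * (Real.cos θ * |Real.cos θ| ^ p)) *
      Mhat p α (ξ * (Real.sin θ * |Real.sin θ| ^ p)) = Mhat p α ξ := by
    intro θ ξ
    simp only [Mhat]
    rw [← Real.exp_add, ← mul_add, key]
  exact ⟨fun ξ => by simp [prod], key, prod⟩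

end
end

section
/- Let 0 < p ≤ 1 and let c_p be a constant with 0 < c_p ≤ p(1+p)2^{1−p}. Then the function Φ(y) = 1 − y^{1+p} − (1−y)^{1+p} − c_p y(1−y) is nonnegative on [0,1]; equivalently, 1 − y^{1+p} − (1−y)^{1+p} ≥ c_p y(1−y) for all y ∈ [0,1]. -/
/-!
The function `Φ(y) = 1 - y^{1+p} - (1-y)^{1+p} - c_p y(1-y)` vanishes at `0` and `1`, so it is
enough that it is concave on `[0,1]`. Its second derivative is
`2 c_p - p(1+p) (y^{p-1} + (1-y)^{p-1})`, and since `p - 1 ≤ 0` the bracket is minimal at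
`y = 1/2`, where it equals `2 · 2^{1-p}` (`two_mul_two_rpow_le`); the bound on `c_p` is exactly
what makes `Φ'' ≤ 0`.
-/

open Real Set

/-- The sum `y^{p-1} + (1-y)^{p-1}` is at least its value at `y = 1/2`: by AM-GM it dominates
`2 (y(1-y))^{(p-1)/2}`, and `y(1-y) ≤ 1/4` with a nonpositive exponent. -/
lemma two_mul_two_rpow_le {p y : ℝ} (hp1 : p ≤ 1) (h0 : 0 < y) (h1 : y < 1) :
    2 * (2 : ℝ) ^ (1 - p) ≤ y ^ (p - 1) + (1 - y) ^ (p - 1) := by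
  have hy : 0 < 1 - y := by linarith
  have key : (2 : ℝ) ^ (1 - p) ≤ y ^ ((p - 1) / 2) * (1 - y) ^ ((p - 1) / 2) := by
    rw [← mul_rpow h0.le hy.le]
    calc (2 : ℝ) ^ (1 - p) = (1 / 4 : ℝ) ^ ((p - 1) / 2) := by
          rw [show (1 / 4 : ℝ) = (2 : ℝ) ^ (-2 : ℝ) by
            rw [rpow_neg (by norm_num)]; norm_num, ← rpow_mul (by norm_num)]
          congr 1; ring
      _ ≤ _ := rpow_le_rpow_of_nonpos (mul_pos h0 hy)
          (by nlinarith [sq_nonneg (y - 1 / 2)]) (by linarith)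
  have sq : ∀ x : ℝ, 0 < x → x ^ (p - 1) = (x ^ ((p - 1) / 2)) ^ 2 := fun x hx ↦ by
    rw [← rpow_natCast, ← rpow_mul hx.le]
    congr 1; push_cast; ring
  rw [sq y h0, sq _ hy]
  nlinarith [sq_nonneg (y ^ ((p - 1) / 2) - (1 - y) ^ ((p - 1) / 2))]

/-- Lower bound on the fractional energy loss per collision in the inelastic
Kac model: for `0 < c_p ≤ p(1+p)2^{1-p}`, the function
`Φ(y) = 1 - y^{1+p} - (1-y)^{1+p} - c_p y(1-y)` is nonnegative on `[0,1]`. -/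
theorem energy_loss_lower_bound (p cp : ℝ) (hp : 0 < p) (hp1 : p ≤ 1)
    (hcp_pos : 0 < cp) (hcp : cp ≤ p * (1 + p) * (2 : ℝ) ^ (1 - p)) :
    ∀ y ∈ Icc (0 : ℝ) 1,
      cp * y * (1 - y) ≤ 1 - y ^ (1 + p) - (1 - y) ^ (1 + p) := by
  have hconc : ConcaveOn ℝ (Icc (0 : ℝ) 1)
      (fun y ↦ 1 - y ^ (1 + p) - (1 - y) ^ (1 + p) - cp * y * (1 - y)) := by
    refine concaveOn_of_hasDerivWithinAt2_nonpos (convex_Icc 0 1)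
      (f' := fun y ↦ -((1 + p) * y ^ p) + (1 + p) * (1 - y) ^ p - cp * (1 - 2 * y))
      (f'' := fun y ↦ 2 * cp - p * (1 + p) * (y ^ (p - 1) + (1 - y) ^ (p - 1))) ?_ ?_ ?_ ?_
    · have c1 : Continuous fun y : ℝ ↦ y ^ (1 + p) := continuous_rpow_const (by linarith)
      have c2 : Continuous fun y : ℝ ↦ (1 - y) ^ (1 + p) := c1.comp (by fun_prop)
      exact Continuous.continuousOn (by fun_prop)
    all_goals
      intro y hy
      rw [interior_Icc] at hy
      obtain ⟨h0, h1⟩ := hy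
      have hy : 0 < 1 - y := by linarith
      have hs : HasDerivAt (fun y : ℝ ↦ 1 - y) (-1) y := (hasDerivAt_id y).const_sub 1
    · have d1 := (hasDerivAt_id y).rpow_const (p := 1 + p) (Or.inl h0.ne')
      have d2 := hs.rpow_const (p := 1 + p) (Or.inl hy.ne')
      have d3 := ((hasDerivAt_id y).const_mul cp).mul hs
      refine ((((d1.const_sub 1).sub d2).sub d3).congr_deriv ?_).hasDerivWithinAt
      simp only [id, add_sub_cancel_left]
      ring
    · have d1 := ((hasDerivAt_id y).rpow_const (p := p) (Or.inl h0.ne')).const_mul (1 + p)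
      have d2 := (hs.rpow_const (p := p) (Or.inl hy.ne')).const_mul (1 + p)
      have d3 := (((hasDerivAt_id y).const_mul 2).const_sub 1).const_mul cp
      refine (((d1.neg.add d2).sub d3).congr_deriv ?_).hasDerivWithinAt
      simp only [id]
      ring
    · have h := mul_le_mul_of_nonneg_left (two_mul_two_rpow_le hp1 h0 h1)
        (show 0 ≤ p * (1 + p) by positivity)
      linarith
  intro y hy
  have hp' : 1 + p ≠ 0 := by linarith
  have h := hconc.2 (left_mem_Icc.2 zero_le_one) (right_mem_Icc.2 zero_le_one)
    (sub_nonneg.2 hy.2) hy.1 (sub_add_cancel 1 y)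
  simp [zero_rpow hp'] at h
  linarith
end

section
/- Let 0 < p ≤ 1, α > 0, and let g : ℝ → ℝ be continuous with g(0) = 1, differentiable on (0,∞), and satisfy: (A) lim_{ξ→0⁺} (1 − g(ξ))/ξ^{2/(p+1)} = α; and (B) there exist δ ∈ (0,1) and, for every R > 0, a constant K(R) > 0 such that |g′(ξ)/ξ^{(1−p)/(p+1)} − g′(τ)/τ^{(1−p)/(p+1)}| ≤ K(R)|ξ−τ|^δ for all ξ, τ ∈ (0, R], ξ ≠ τ. Then lim_{ξ→0⁺} g′(ξ)/ξ^{(1−p)/(p+1)} = −2α/(p+1), and consequently, for all ξ ∈ (0,R], |g′(ξ)/ξ^{(1−p)/(p+1)} + 2α/(p+1)| ≤ K(R) ξ^δ and |g′(ξ)|/ξ^{(1−p)/(p+1)} ≤ 2α/(p+1) + K(R) R^δ. -/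
/-!
Write `s = (1 - p)/(p + 1)`, so that `2/(p + 1) = s + 1`, and `h ξ = g'(ξ)/ξ ^ s`. Cauchy's mean
value theorem for the pair `g`, `ξ ↦ ξ ^ (s + 1)` on `[0, ξ]` shows that the quotient in
condition (A), times `-(s + 1)`, is a value `h c` with `0 < c < ξ` (`exists_weighted_deriv_eq`).
By condition (B), `h ξ` differs from `h c` by at most `K 1 * ξ ^ δ` for `ξ ≤ 1`, so `h` has the
limit `-(s + 1) α` at `0⁺`. The first bound is condition (B) with `τ → 0⁺`, the second follows
from it by the triangle inequality.
-/

open Real Set Filter Topology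

/-- Cauchy's mean value theorem for `g` and the power `x ↦ x ^ (s + 1)` on `[0, ξ]`. -/
lemma exists_weighted_deriv_eq {g : ℝ → ℝ} (hg_cont : Continuous g)
    (hg_diff : ∀ ξ > (0 : ℝ), DifferentiableAt ℝ g ξ) {s ξ : ℝ} (hs : 0 ≤ s) (hξ : 0 < ξ) :
    ∃ c ∈ Ioo 0 ξ, deriv g c / c ^ s = -(s + 1) * ((g 0 - g ξ) / ξ ^ (s + 1)) := by
  obtain ⟨c, hc, h⟩ := exists_ratio_hasDerivAt_eq_ratio_slope g (deriv g) hξ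
    hg_cont.continuousOn (fun x hx => (hg_diff x hx.1).hasDerivAt)
    (fun x : ℝ => x ^ (s + 1)) (fun x => (s + 1) * x ^ s)
    (Real.continuous_rpow_const (by linarith)).continuousOn
    (fun x hx => by
      simpa using Real.hasDerivAt_rpow_const (p := s + 1) (Or.inl hx.1.ne'))
  refine ⟨c, hc, ?_⟩
  have h1 : 0 < c ^ s := Real.rpow_pos_of_pos hc.1 s
  have h2 : 0 < ξ ^ (s + 1) := Real.rpow_pos_of_pos hξ _
  simp only [Real.zero_rpow (show s + 1 ≠ 0 by linarith), sub_zero] at h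
  field_simp
  linarith

/-- Conditions (A) and (B) on the initial datum imply
`lim_{ξ→0⁺} g'(ξ)/ξ^{(1-p)/(p+1)} = -2α/(p+1)`, together with the
quantitative bounds on `(0,R]`. -/
theorem limit_of_weighted_derivative
    (p α : ℝ) (hp : 0 < p) (hp1 : p ≤ 1) (hα : 0 < α)
    (g : ℝ → ℝ) (hg_cont : Continuous g) (hg_one : g 0 = 1)
    (hg_diff : ∀ ξ > (0 : ℝ), DifferentiableAt ℝ g ξ)
    -- condition (A)
    (hA : Tendsto (fun ξ => (1 - g ξ) / ξ ^ (2 / (p + 1))) (𝓝[>] 0) (𝓝 α))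
    -- condition (B)
    (δ : ℝ) (hδ : δ ∈ Ioo (0 : ℝ) 1) (K : ℝ → ℝ) (hK_pos : ∀ R > (0 : ℝ), 0 < K R)
    (hB : ∀ R > (0 : ℝ), ∀ ξ ∈ Ioc (0 : ℝ) R, ∀ τ ∈ Ioc (0 : ℝ) R, ξ ≠ τ →
      |deriv g ξ / ξ ^ ((1 - p) / (p + 1)) -
        deriv g τ / τ ^ ((1 - p) / (p + 1))| ≤ K R * |ξ - τ| ^ δ) :
    Tendsto (fun ξ => deriv g ξ / ξ ^ ((1 - p) / (p + 1))) (𝓝[>] 0)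
      (𝓝 (-2 * α / (p + 1))) ∧
    (∀ R > (0 : ℝ), ∀ ξ ∈ Ioc (0 : ℝ) R,
      |deriv g ξ / ξ ^ ((1 - p) / (p + 1)) + 2 * α / (p + 1)| ≤ K R * ξ ^ δ) ∧
    (∀ R > (0 : ℝ), ∀ ξ ∈ Ioc (0 : ℝ) R,
      |deriv g ξ| / ξ ^ ((1 - p) / (p + 1)) ≤ 2 * α / (p + 1) + K R * R ^ δ) := by
  have hp0 : 0 < p + 1 := by linarith
  have hs : 0 ≤ (1 - p) / (p + 1) := div_nonneg (by linarith) hp0.le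
  have hq : 2 / (p + 1) = (1 - p) / (p + 1) + 1 := by field_simp; ring
  have hlim_val : -2 * α / (p + 1) = -((1 - p) / (p + 1) + 1) * α := by rw [← hq]; ring
  have hlim_neg : -2 * α / (p + 1) = -(2 * α / (p + 1)) := by ring
  rw [hq] at hA
  generalize (1 - p) / (p + 1) = s at *
  have hpow : Tendsto (fun ξ : ℝ => K 1 * ξ ^ δ) (𝓝[>] 0) (𝓝 0) := by
    have h := ((Real.continuous_rpow_const hδ.1.le).tendsto (0 : ℝ)).const_mul (K 1)
    rw [Real.zero_rpow hδ.1.ne', mul_zero] at h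
    exact h.mono_left nhdsWithin_le_nhds
  -- condition (B) for `0 < τ < ξ`, where `|ξ - τ| ≤ ξ`
  have hB' : ∀ R > (0 : ℝ), ∀ ξ ∈ Ioc (0 : ℝ) R, ∀ τ ∈ Ioo (0 : ℝ) ξ,
      |deriv g ξ / ξ ^ s - deriv g τ / τ ^ s| ≤ K R * ξ ^ δ := by
    intro R hR ξ hξ τ hτ
    refine (hB R hR ξ hξ τ ⟨hτ.1, hτ.2.le.trans hξ.2⟩ hτ.2.ne').trans ?_
    refine mul_le_mul_of_nonneg_left (Real.rpow_le_rpow (abs_nonneg _) ?_ hδ.1.le) (hK_pos R hR).le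
    rw [abs_of_pos (sub_pos.2 hτ.2)]
    linarith [hτ.1]
  have hlim : Tendsto (fun ξ => deriv g ξ / ξ ^ s) (𝓝[>] 0) (𝓝 (-2 * α / (p + 1))) := by
    have hdiff : Tendsto (fun ξ => deriv g ξ / ξ ^ s - -(s + 1) * ((1 - g ξ) / ξ ^ (s + 1)))
        (𝓝[>] 0) (𝓝 0) := by
      refine squeeze_zero_norm' ?_ hpow
      filter_upwards [Ioc_mem_nhdsGT (zero_lt_one' ℝ)] with ξ hξ
      obtain ⟨c, hc, h⟩ := exists_weighted_deriv_eq hg_cont hg_diff hs hξ.1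
      rw [hg_one] at h
      rw [← h, Real.norm_eq_abs]
      exact hB' 1 one_pos ξ hξ c hc
    have h := hdiff.add (hA.const_mul (-(s + 1)))
    rw [hlim_val]
    simpa using h
  have hbound : ∀ R > (0 : ℝ), ∀ ξ ∈ Ioc (0 : ℝ) R,
      |deriv g ξ / ξ ^ s + 2 * α / (p + 1)| ≤ K R * ξ ^ δ := by
    intro R hR ξ hξ
    have h := (hlim.const_sub (deriv g ξ / ξ ^ s)).abs
    rw [hlim_neg, sub_neg_eq_add] at h
    refine le_of_tendsto h ?_
    filter_upwards [Ioo_mem_nhdsGT hξ.1] with τ hτ using hB' R hR ξ hξ τ hτ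
  refine ⟨hlim, hbound, fun R hR ξ hξ => ?_⟩
  have hpos : 0 < ξ ^ s := Real.rpow_pos_of_pos hξ.1 s
  have hmono : K R * ξ ^ δ ≤ K R * R ^ δ :=
    mul_le_mul_of_nonneg_left (Real.rpow_le_rpow hξ.1.le hξ.2 hδ.1.le) (hK_pos R hR).le
  have hα' : 0 < 2 * α / (p + 1) := by positivity
  rw [← abs_of_pos hpos, ← abs_div]
  have h := abs_le.1 ((hbound R hR ξ hξ).trans hmono)
  exact abs_le.2 ⟨by linarith [h.1], by linarith [h.2]⟩
end

section
/- Let 0 < p ≤ 1 and 0 < δ ≤ 2p/(p+1). Then the function x ↦ sin x / x^{(1−p)/(p+1)} is uniformly δ-Hölder continuous on (0,∞): there exists C > 0 such that for all x, y > 0, |sin x / x^{(1−p)/(p+1)} − sin y / y^{(1−p)/(p+1)}| ≤ C |x−y|^δ. -/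
/-!
Put `a = (1 - p) / (p + 1) ∈ [0, 1)`, so `1 - a = 2p / (p + 1)`. For `x < y` write
`sin x / x ^ a - sin y / y ^ a = (sin x - sin y) / y ^ a + sin x * (1 / x ^ a - 1 / y ^ a)`.
The first term is at most `(y - x) / y ^ a`. Since `|sin x| ≤ x` and `t ↦ t / t ^ a = t ^ (1 - a)`
is monotone, the second is at most `x / x ^ a - x / y ^ a ≤ y / y ^ a - x / y ^ a`, the same bound.
Finally `y ≥ y - x` gives `(y - x) / y ^ a ≤ (y - x) ^ (1 - a)`. This settles small increments for
every exponent `δ ≤ 1 - a`; increments of size at least `1` are covered by `|sin x / x ^ a| ≤ 1`.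
So `C = 2` works.
-/

open Real Set

/-- The local estimate, with the optimal exponent `1 - a`. -/
lemma abs_sin_div_rpow_sub_le {a x y : ℝ} (ha : 0 ≤ a) (ha1 : a ≤ 1) (hx : 0 < x) (hxy : x < y) :
    |Real.sin x / x ^ a - Real.sin y / y ^ a| ≤ 2 * (y - x) ^ (1 - a) := by
  have hy : 0 < y := hx.trans hxy
  have hh : 0 < y - x := sub_pos.2 hxy
  have hA : 0 < x ^ a := rpow_pos_of_pos hx a
  have hB : 0 < y ^ a := rpow_pos_of_pos hy a
  have hAB : x ^ a ≤ y ^ a := rpow_le_rpow hx.le hxy.le ha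
  have hmono : x / x ^ a ≤ y / y ^ a := by
    have h := rpow_le_rpow hx.le hxy.le (sub_nonneg.2 ha1)
    rwa [rpow_sub hx, rpow_sub hy, rpow_one, rpow_one] at h
  have hhB : (y - x) / y ^ a ≤ (y - x) ^ (1 - a) := by
    rw [rpow_sub hh, rpow_one]
    exact div_le_div_of_nonneg_left hh.le (rpow_pos_of_pos hh a)
      (rpow_le_rpow hh.le (by linarith) ha)
  have h1 : |(Real.sin x - Real.sin y) / y ^ a| ≤ (y - x) / y ^ a := by
    rw [abs_div, abs_of_pos hB]
    have h : |Real.sin x - Real.sin y| ≤ y - x := by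
      have := Real.abs_sin_sub_sin_le x y
      rwa [abs_sub_comm x y, abs_of_pos hh] at this
    gcongr
  have h2 : |Real.sin x * (1 / x ^ a - 1 / y ^ a)| ≤ (y - x) / y ^ a := by
    have hd : 0 ≤ 1 / x ^ a - 1 / y ^ a := sub_nonneg.2 (one_div_le_one_div_of_le hA hAB)
    have hs : |Real.sin x| ≤ x := by
      simpa [abs_of_pos hx] using Real.abs_sin_le_abs (x := x)
    rw [abs_mul, abs_of_nonneg hd]
    calc |Real.sin x| * (1 / x ^ a - 1 / y ^ a) ≤ x * (1 / x ^ a - 1 / y ^ a) := by gcongr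
      _ = x / x ^ a - x / y ^ a := by ring
      _ ≤ y / y ^ a - x / y ^ a := by linarith
      _ = (y - x) / y ^ a := by ring
  calc |Real.sin x / x ^ a - Real.sin y / y ^ a|
      = |(Real.sin x - Real.sin y) / y ^ a + Real.sin x * (1 / x ^ a - 1 / y ^ a)| := by
        congr 1; ring
    _ ≤ _ := abs_add_le _ _
    _ ≤ _ := by linarith

lemma abs_sin_div_rpow_le_one {a x : ℝ} (ha : 0 ≤ a) (ha1 : a ≤ 1) (hx : 0 < x) :
    |Real.sin x / x ^ a| ≤ 1 := by
  have hA : 0 < x ^ a := rpow_pos_of_pos hx a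
  rw [abs_div, abs_of_pos hA, div_le_one hA]
  rcases le_total x 1 with h | h
  · have hs : |Real.sin x| ≤ x := by
      simpa [abs_of_pos hx] using Real.abs_sin_le_abs (x := x)
    have := rpow_le_rpow_of_exponent_ge hx h ha1
    rw [rpow_one] at this
    exact hs.trans this
  · exact (Real.abs_sin_le_one x).trans (one_le_rpow h ha)

/-- The function `x ↦ sin x / x^{(1-p)/(p+1)}` is uniformly δ-Hölder
continuous on `(0,∞)` for `0 < δ ≤ 2p/(p+1)`. -/
theorem sin_over_rpow_holder (p δ : ℝ) (hp : 0 < p) (hp1 : p ≤ 1)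
    (hδ : 0 < δ) (hδ2 : δ ≤ 2 * p / (p + 1)) :
    ∃ C > (0 : ℝ), ∀ x > (0 : ℝ), ∀ y > (0 : ℝ),
      |Real.sin x / x ^ ((1 - p) / (p + 1)) -
        Real.sin y / y ^ ((1 - p) / (p + 1))| ≤ C * |x - y| ^ δ := by
  have ha : 0 ≤ (1 - p) / (p + 1) := div_nonneg (by linarith) (by linarith)
  have ha1 : (1 - p) / (p + 1) ≤ 1 := by
    rw [div_le_one (by linarith)]; linarith
  have hδa : δ ≤ 1 - (1 - p) / (p + 1) := by
    have : 1 - (1 - p) / (p + 1) = 2 * p / (p + 1) := by field_simp; ring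
    rwa [this]
  generalize (1 - p) / (p + 1) = a at *
  refine ⟨2, two_pos, fun x hx y hy => ?_⟩
  wlog hxy : x ≤ y generalizing x y
  · rw [abs_sub_comm, abs_sub_comm x y]
    exact this y hy x hx (le_of_not_ge hxy)
  rcases hxy.eq_or_lt with rfl | hxy
  · simp [zero_rpow hδ.ne']
  have hh : 0 < y - x := sub_pos.2 hxy
  rw [abs_sub_comm x y, abs_of_pos hh]
  rcases le_total (y - x) 1 with h1 | h1
  · refine (abs_sin_div_rpow_sub_le ha ha1 hx hxy).trans ?_
    have := rpow_le_rpow_of_exponent_ge hh h1 hδa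
    linarith
  · have h := abs_sub (Real.sin x / x ^ a) (Real.sin y / y ^ a)
    have hx1 := abs_sin_div_rpow_le_one ha ha1 hx
    have hy1 := abs_sin_div_rpow_le_one ha ha1 hy
    have := one_le_rpow h1 hδ.le
    linarith
end

section
/- Let 0 < p ≤ 1 and let b ∈ L¹([−π/2, π/2]) be nonnegative and even. Let f ∈ C¹([0,∞), L¹(ℝ, (1+v²)dv)) be the unique nonnegative solution of the dissipative Kac equation ∂ₜ f = Q_p(f,f) with initial probability density f₀ of finite energy ∫ v² f₀(v) dv = E₀ < ∞. Then for all t ≥ 0, ∫ v² f(v,t) dv = E₀ exp(−L t), where L = ∫_{−π/2}^{π/2} b(θ)(1 − |sinθ|^{2+2p} − |cosθ|^{2+2p}) dθ ≥ 0. -/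
/-!
The classical computation tests the equation against `1` and `v²`. The change of variables
`(v, w) ↦ (v**, w**)` has Jacobian `χ⁻¹`, so the gain term has mass `B M²` and energy
`(∫ b χ) M E`, where `B = ∫ b`, `M` is the mass and `E` the energy; the cross term of the energy
vanishes because `b` is even and `sin θ |sin θ|^p` is odd (`lintegral_sq_mul_Qplus`). The loss term
contributes `-B M²` and `-B M E`. Hence `M' = 0` and `E' = -L M E`.

The equation is only assumed pointwise in `v`, so exchanging `∂ₜ` with `∫ dv` needs an argument.
On a time interval where `M ≤ K`, the bound `Q(f,f) ≥ -B M f` makes `exp (B K t) f(v,t)`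
nondecreasing in `t`. The fundamental theorem of calculus then applies with a nonnegative
derivative, and Tonelli's theorem yields integrated balance laws (`IsRegularSol.balance`). These are
linear integral equations, solved by exponentials; in particular `M` is constant on any interval on
which it is bounded. By Fatou's lemma `M` is lower semicontinuous, and a Baire category argument
(`eq_of_bounded_const`) shows that such a function is constant. With `M = 1` the balance law for
`v²` gives the decay of the energy.

The time slices of `f` are only a.e. measurable. `exists_regularSol` replaces `f` by a jointly
measurable function that differs from it on one null set of velocities; this leaves the collision
operator unchanged at all other velocities.
-/

open Real MeasureTheory Set

noncomputable section

/-- Post-collision coefficient `cos θ |cos θ|^p`. -/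
def ccoef (p θ : ℝ) : ℝ := Real.cos θ * |Real.cos θ| ^ p

/-- Post-collision coefficient `sin θ |sin θ|^p`. -/
def scoef (p θ : ℝ) : ℝ := Real.sin θ * |Real.sin θ| ^ p

/-- Jacobian factor `χ = |sin θ|^{2+2p} + |cos θ|^{2+2p}`. -/
def chi (p θ : ℝ) : ℝ := |Real.sin θ| ^ (2 + 2 * p) + |Real.cos θ| ^ (2 + 2 * p)

/-- Pre-collision velocity `v**` of the inverse collision. -/
def vpre (p θ v w : ℝ) : ℝ := (ccoef p θ * v + scoef p θ * w) / chi p θ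

/-- Pre-collision velocity `w**` of the inverse collision. -/
def wpre (p θ v w : ℝ) : ℝ := (-(scoef p θ) * v + ccoef p θ * w) / chi p θ

/-- The dissipative Kac collision operator `Q_p(f,f)`. -/
def Qp (p : ℝ) (b : ℝ → ℝ) (f : ℝ → ℝ) (v : ℝ) : ℝ :=
  ∫ w : ℝ, ∫ θ in (-(π / 2))..(π / 2),
    b θ * ((chi p θ)⁻¹ * f (vpre p θ v w) * f (wpre p θ v w) - f v * f w)

open Topology Filter
open scoped ENNReal NNReal

/-! ### Functions of time -/

theorem bddAbove_Icc_of_locally {m : ℝ → ℝ≥0∞} {a b : ℝ}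
    (h : ∀ t ∈ Icc a b, ∃ K : ℝ≥0, ∀ᶠ s in 𝓝 t, m s ≤ K) :
    ∃ K : ℝ≥0, ∀ t ∈ Icc a b, m t ≤ K := by
  refine isCompact_Icc.induction_on (p := fun S => ∃ K : ℝ≥0, ∀ t ∈ S, m t ≤ K)
    ⟨0, by simp⟩ ?_ ?_ ?_
  · rintro s t hst ⟨K, hK⟩
    exact ⟨K, fun x hx => hK x (hst hx)⟩
  · rintro s t ⟨K, hK⟩ ⟨K', hK'⟩
    refine ⟨max K K', fun x hx => ?_⟩
    rcases hx with hx | hx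
    · exact (hK x hx).trans (by exact_mod_cast le_max_left _ _)
    · exact (hK' x hx).trans (by exact_mod_cast le_max_right _ _)
  · intro x hx
    obtain ⟨K, hK⟩ := h x hx
    exact ⟨{s | m s ≤ K}, mem_nhdsWithin_of_mem_nhds hK, K, fun t ht => ht⟩

/-- Propagation to the right off an exceptional closed set `F`: if `m` is constant on every interval
where it is bounded, is locally bounded off `F`, and is at most `n` on `F ∩ [t₀, t]`, then
`m t ≤ n`, because `m` keeps on `[s, t]` its value at the last point `s` of `F` before `t`. -/
theorem le_of_closed_right {m : ℝ → ℝ≥0∞} (hfin : ∀ t, m t ≠ ∞)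
    (hconst : ∀ a b, a ≤ b → ∀ K : ℝ≥0, (∀ t ∈ Icc a b, m t ≤ K) → m a = m b)
    {F : Set ℝ} (hF : IsClosed F) (hloc : ∀ t ∉ F, ∃ K : ℝ≥0, ∀ᶠ s in 𝓝 t, m s ≤ K)
    {t₀ t : ℝ} (h0 : t₀ ∈ F) (h0t : t₀ ≤ t) {n : ℝ≥0}
    (hn : ∀ s ∈ F ∩ Icc t₀ t, m s ≤ n) : m t ≤ n := by
  -- `s` is the last point of `F` in `[t₀, t]`.
  obtain ⟨s, hsF, hs⟩ := (isCompact_Icc.inter_left hF).exists_isGreatest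
    ⟨t₀, h0, left_mem_Icc.2 h0t⟩
  have heq : ∀ r ∈ Ioc s t, m r = m t := by
    intro r hr
    obtain ⟨K, hK⟩ := bddAbove_Icc_of_locally (m := m) (a := r) (b := t) (fun x hx => hloc x
      (fun hxF => absurd (hs ⟨hxF, hsF.2.1.trans (hr.1.le.trans hx.1), hx.2⟩)
        (not_le.2 (hr.1.trans_le hx.1))))
    exact hconst r t hr.2 K hK
  have hle : m s ≤ n := hn s hsF
  have : m s = m t := by
    refine hconst s t hsF.2.2 (max n (m t).toNNReal) fun r hr => ?_
    rcases hr.1.eq_or_lt with h | h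
    · rw [← h]; exact hle.trans (by exact_mod_cast le_max_left _ _)
    · rw [heq r ⟨h, hr.2⟩, ENNReal.coe_max, ENNReal.coe_toNNReal (hfin t)]
      exact le_max_right _ _
  exact this ▸ hle

/-- A finite lower semicontinuous function that is constant on every interval where it is bounded
is constant. By Baire's theorem, the closed set of points near which `m` is unbounded would have a
portion on which `m` is bounded, and this bound propagates to the gaps of the set. -/
theorem eq_of_bounded_const {m : ℝ → ℝ≥0∞} (hfin : ∀ t, m t ≠ ∞)
    (hlsc : ∀ K : ℝ≥0, IsClosed {t | m t ≤ K})
    (hconst : ∀ a b, a ≤ b → ∀ K : ℝ≥0, (∀ t ∈ Icc a b, m t ≤ K) → m a = m b)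
    {a b : ℝ} (hab : a ≤ b) : m a = m b := by
  set U : Set ℝ := {t | ∃ K : ℝ≥0, ∀ᶠ s in 𝓝 t, m s ≤ K} with hU
  have hUo : IsOpen U := by
    rw [isOpen_iff_mem_nhds]
    rintro t ⟨K, hK⟩
    filter_upwards [eventually_eventually_nhds.2 hK] with s hs using ⟨K, hs⟩
  have hFc : IsClosed Uᶜ := hUo.isClosed_compl
  have hloc : ∀ t ∉ Uᶜ, ∃ K : ℝ≥0, ∀ᶠ s in 𝓝 t, m s ≤ K := fun t ht => not_not.1 ht
  suffices hne : ¬ (Uᶜ).Nonempty by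
    rw [not_nonempty_iff_eq_empty] at hne
    obtain ⟨K, hK⟩ := bddAbove_Icc_of_locally (m := m) (a := a) (b := b)
      (fun t _ => hloc t (by simp [hne]))
    exact hconst a b hab K hK
  intro hne
  have : Nonempty (Uᶜ : Set ℝ) := hne.to_subtype
  have : CompleteSpace (Uᶜ : Set ℝ) := hFc.completeSpace_coe
  obtain ⟨n, ⟨t₀, ht₀⟩, hmem⟩ := nonempty_interior_of_iUnion_of_closed
    (f := fun n : ℕ => {t : (Uᶜ : Set ℝ) | m t ≤ (n : ℝ≥0)})
    (fun n => (hlsc n).preimage continuous_subtype_val)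
    (by
      ext t
      simp only [mem_iUnion, mem_ofPred_eq, mem_univ, iff_true]
      obtain ⟨n, hn⟩ := ENNReal.exists_nat_gt (hfin t)
      exact ⟨n, by exact_mod_cast hn.le⟩)
  rw [mem_interior_iff_mem_nhds, nhds_subtype_eq_comap, mem_comap] at hmem
  obtain ⟨V, hV, hVsub⟩ := hmem
  obtain ⟨ε, hε, hball⟩ := Metric.mem_nhds_iff.1 hV
  rw [Real.ball_eq_Ioo] at hball
  have key : ∀ s ∈ Uᶜ, s ∈ Ioo (t₀ - ε) (t₀ + ε) → m s ≤ (n : ℝ≥0) := fun s hs hs' =>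
    hVsub (a := ⟨s, hs⟩) (hball hs')
  refine ht₀ ⟨(n : ℝ≥0), ?_⟩
  filter_upwards [Ioo_mem_nhds (sub_lt_self t₀ hε) (lt_add_of_pos_right t₀ hε)] with t ht
  rcases le_total t₀ t with h | h
  · exact le_of_closed_right hfin hconst hFc hloc ht₀ h
      fun s hs => key s hs.1 ⟨by linarith [hs.2.1], by linarith [hs.2.2, ht.2]⟩
  · -- The left half follows by reflecting time.
    have := le_of_closed_right (m := fun s => m (-s)) (F := Neg.neg ⁻¹' Uᶜ) (t₀ := -t₀) (t := -t)
      (n := n) (fun s => hfin _)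
      (fun a b hab K hK => (hconst (-b) (-a) (by linarith) K
        (fun s hs => by
          have := hK (-s) ⟨by linarith [hs.2], by linarith [hs.1]⟩
          simpa using this)).symm)
      (hFc.preimage continuous_neg)
      (fun s hs => by
        obtain ⟨K, hK⟩ := hloc (-s) hs
        exact ⟨K, (continuous_neg.tendsto s).eventually hK⟩)
      (by simpa using ht₀) (by linarith)
      (fun s hs => key (-s) hs.1 ⟨by linarith [hs.2.2, ht.1], by linarith [hs.2.1]⟩)
    simpa using this

/-- The integral equation `N(t) = N(a) + ∫ₐᵗ k N`, with finite `N` but no continuity assumption, has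
only the exponential solution. -/
theorem eq_exp_of_lintegral_eq {N : ℝ → ℝ} {k a b : ℝ} (hk : 0 ≤ k) (hab : a ≤ b)
    (hN : ∀ t, 0 ≤ N t) (hmeas : Measurable N)
    (h : ∀ t ∈ Icc a b, ENNReal.ofReal (N t) =
      ENNReal.ofReal (N a) + ∫⁻ s in Ioc a t, ENNReal.ofReal (k * N s)) :
    N b = N a * Real.exp (k * (b - a)) := by
  have hint : IntegrableOn (fun s => k * N s) (Ioc a b) := by
    refine ⟨(hmeas.const_mul k).aestronglyMeasurable, ?_⟩
    rw [hasFiniteIntegral_iff_ofReal (Eventually.of_forall fun s => mul_nonneg hk (hN s))]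
    refine lt_of_le_of_lt ?_ (ENNReal.ofReal_lt_top (r := N b))
    rw [h b ⟨hab, le_rfl⟩]
    exact le_add_self
  have hII : IntervalIntegrable (fun s => k * N s) volume a b :=
    (intervalIntegrable_iff_integrableOn_Ioc_of_le hab).2 hint
  have hreal : ∀ t ∈ Icc a b, N t = N a + ∫ s in a..t, k * N s := by
    intro t ht
    have h1 := h t ht
    rw [← ofReal_integral_eq_lintegral_ofReal
      (hint.mono_set (Ioc_subset_Ioc_right ht.2))
      (Eventually.of_forall fun s => mul_nonneg hk (hN s)),
      ← ENNReal.ofReal_add (hN a) (integral_nonneg fun s => mul_nonneg hk (hN s)),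
      ENNReal.ofReal_eq_ofReal_iff (hN t)
        (add_nonneg (hN a) (integral_nonneg fun s => mul_nonneg hk (hN s)))] at h1
    rw [h1, intervalIntegral.integral_of_le ht.1]
  have hcont : ContinuousOn N (Icc a b) := by
    have : ContinuousOn (fun t => N a + ∫ s in a..t, k * N s) (Icc a b) := by
      have := intervalIntegral.continuousOn_primitive_interval
        (f := fun s => k * N s) (μ := volume) (a := a) (b := b)
        (by rw [uIcc_of_le hab]; exact (integrableOn_Icc_iff_integrableOn_Ioc enorm_ne_top).2 hint)
      rw [uIcc_of_le hab] at this
      exact continuousOn_const.add this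
    exact this.congr hreal
  have hder : ∀ t ∈ Ico a b, HasDerivWithinAt N (k * N t) (Ici t) t := by
    intro t ht
    have hc : ContinuousWithinAt (fun s => k * N s) (Ioi t) t :=
      ((continuousOn_const.mul hcont t ⟨ht.1, ht.2.le⟩).mono_of_mem_nhdsWithin
        (Icc_mem_nhdsGT_of_mem ht))
    have h1 := intervalIntegral.integral_hasDerivWithinAt_right (s := Ici t) (t := Ioi t)
      (hII.mono_set (by
        rw [uIcc_of_le ht.1, uIcc_of_le hab]; exact Icc_subset_Icc_right ht.2.le))
      ((hmeas.const_mul k).stronglyMeasurable.stronglyMeasurableAtFilter) hc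
    have h2 := h1.const_add (N a)
    refine (h2.congr_of_eventuallyEq ?_ (hreal t ⟨ht.1, ht.2.le⟩))
    filter_upwards [Icc_mem_nhdsGE ht.2] with s hs
    exact hreal s ⟨ht.1.trans hs.1, hs.2⟩
  have hG := constant_of_has_deriv_right_zero (f := fun t => N t * Real.exp (-(k * (t - a))))
    (a := a) (b := b) (hcont.mul (by fun_prop)) (fun t ht => by
      have he : HasDerivWithinAt (fun t => Real.exp (-(k * (t - a))))
          (Real.exp (-(k * (t - a))) * (-(k * 1))) (Ici t) t :=
        ((((hasDerivAt_id t).sub_const a).const_mul k).neg.exp).hasDerivWithinAt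
      have := (hder t ht).mul he
      refine this.congr_deriv ?_
      ring) b ⟨hab, le_rfl⟩
  simp only [sub_self, mul_zero, neg_zero, Real.exp_zero, mul_one] at hG
  rw [← hG, mul_assoc, ← Real.exp_add]
  simp

/-- The fundamental theorem of calculus for a nonnegative derivative, whose integrability is then
automatic. -/
theorem ofReal_eq_add_lintegral_deriv {u u' : ℝ → ℝ} {a b : ℝ} (hab : a ≤ b)
    (hcont : ContinuousOn u (Icc a b))
    (hder : ∀ t ∈ Ioo a b, HasDerivWithinAt u (u' t) (Ioi t) t)
    (hpos : ∀ t ∈ Ioc a b, 0 ≤ u' t) (hua : 0 ≤ u a) :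
    ENNReal.ofReal (u b) = ENNReal.ofReal (u a) + ∫⁻ t in Ioc a b, ENNReal.ofReal (u' t) := by
  have hint : IntegrableOn u' (Ioc a b) :=
    intervalIntegral.integrableOn_deriv_right_of_nonneg hcont hder
      fun t ht => hpos t ⟨ht.1, ht.2.le⟩
  have h0 : 0 ≤ᵐ[volume.restrict (Ioc a b)] u' :=
    (ae_restrict_iff' measurableSet_Ioc).2 (Eventually.of_forall hpos)
  have h := intervalIntegral.integral_eq_sub_of_hasDeriv_right_of_le hab hcont hder
    ((intervalIntegrable_iff_integrableOn_Ioc_of_le hab).2 hint)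
  rw [intervalIntegral.integral_of_le hab] at h
  rw [← ofReal_integral_eq_lintegral_ofReal hint h0,
    ← ENNReal.ofReal_add hua (integral_nonneg_of_ae h0), h]
  congr 1; ring

/-! ### Collision coefficients -/

theorem ccoef_sq (p : ℝ) (hp : 0 < p) (θ : ℝ) : ccoef p θ ^ 2 = |Real.cos θ| ^ (2 + 2 * p) := by
  rw [ccoef, mul_pow, ← sq_abs (Real.cos θ), Real.rpow_add_of_nonneg (abs_nonneg _) (by norm_num)
    (by positivity), mul_comm 2 p, Real.rpow_mul (abs_nonneg _)]
  norm_cast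

theorem scoef_sq (p : ℝ) (hp : 0 < p) (θ : ℝ) : scoef p θ ^ 2 = |Real.sin θ| ^ (2 + 2 * p) := by
  rw [scoef, mul_pow, ← sq_abs (Real.sin θ), Real.rpow_add_of_nonneg (abs_nonneg _) (by norm_num)
    (by positivity), mul_comm 2 p, Real.rpow_mul (abs_nonneg _)]
  norm_cast

theorem chi_eq (p : ℝ) (hp : 0 < p) (θ : ℝ) : chi p θ = ccoef p θ ^ 2 + scoef p θ ^ 2 := by
  rw [ccoef_sq p hp, scoef_sq p hp, chi, add_comm]

theorem chi_nonneg (p θ : ℝ) : 0 ≤ chi p θ := by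
  unfold chi; positivity

theorem chi_pos (p θ : ℝ) : 0 < chi p θ := by
  unfold chi
  by_cases h : Real.sin θ = 0
  · have hc : Real.cos θ ≠ 0 := fun hc => by
      have := Real.sin_sq_add_cos_sq θ
      simp [h, hc] at this
    have := Real.rpow_pos_of_pos (abs_pos.2 hc) (2 + 2 * p)
    have h' : 0 ≤ |Real.sin θ| ^ (2 + 2 * p) := by positivity
    linarith
  · have := Real.rpow_pos_of_pos (abs_pos.2 h) (2 + 2 * p)
    have h' : 0 ≤ |Real.cos θ| ^ (2 + 2 * p) := by positivity
    linarith

theorem chi_le_one (p : ℝ) (hp : 0 < p) (θ : ℝ) : chi p θ ≤ 1 := by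
  have h : ∀ x : ℝ, |x| ≤ 1 → |x| ^ (2 + 2 * p) ≤ x ^ 2 := fun x hx => by
    rw [← sq_abs x, ← Real.rpow_two]
    exact Real.rpow_le_rpow_of_exponent_ge' (abs_nonneg _) hx (by norm_num) (by linarith)
  rw [chi, ← Real.sin_sq_add_cos_sq θ]
  exact add_le_add (h _ (Real.abs_sin_le_one θ)) (h _ (Real.abs_cos_le_one θ))

@[fun_prop] theorem measurable_ccoef (p : ℝ) : Measurable (ccoef p) := by
  unfold ccoef; fun_prop

@[fun_prop] theorem measurable_scoef (p : ℝ) : Measurable (scoef p) := by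
  unfold scoef; fun_prop

@[fun_prop] theorem measurable_chi (p : ℝ) : Measurable (chi p) := by
  unfold chi; fun_prop

/-! ### Collision operator and moments of the gain term -/

/-- The gain integrand `χ⁻¹ g(v**) g(w**)`. -/
def gain (p : ℝ) (g : ℝ → ℝ) (v w θ : ℝ) : ℝ :=
  (chi p θ)⁻¹ * g (vpre p θ v w) * g (wpre p θ v w)

theorem gain_nonneg {p : ℝ} {g : ℝ → ℝ} (hg : ∀ v, 0 ≤ g v) (v w θ : ℝ) : 0 ≤ gain p g v w θ :=
  mul_nonneg (mul_nonneg (inv_nonneg.2 (chi_nonneg p θ)) (hg _)) (hg _)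

theorem measurable_gain {α : Type*} [MeasurableSpace α] (p : ℝ) {g : α → ℝ → ℝ}
    (hg : Measurable (Function.uncurry g))
    {x : α → α} {v w θ : α → ℝ} (hx : Measurable x) (hv : Measurable v) (hw : Measurable w)
    (hθ : Measurable θ) : Measurable fun a => gain p (g (x a)) (v a) (w a) (θ a) := by
  unfold gain
  refine ((by fun_prop : Measurable fun a => (chi p (θ a))⁻¹).mul ?_).mul ?_
  · exact hg.comp (hx.prodMk (by unfold vpre; fun_prop : Measurable fun a => vpre p (θ a) (v a) (w a)))
  · exact hg.comp (hx.prodMk (by unfold wpre; fun_prop : Measurable fun a => wpre p (θ a) (v a) (w a)))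

/-- The collision operator with angular measure `ν` in place of `b(θ) dθ`. -/
def Qν (p : ℝ) (ν : Measure ℝ) (g : ℝ → ℝ) (v : ℝ) : ℝ :=
  ∫ w : ℝ, ∫ θ, (gain p g v w θ - g v * g w) ∂ν

/-- The gain part of the collision operator, as an extended nonnegative number. -/
def Qplus (p : ℝ) (ν : Measure ℝ) (g : ℝ → ℝ) (v : ℝ) : ℝ≥0∞ :=
  ∫⁻ w : ℝ, ∫⁻ θ, ENNReal.ofReal (gain p g v w θ) ∂ν

theorem integral_sub_const_ge {α : Type*} [MeasurableSpace α] {μ : Measure α} {G h : α → ℝ}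
    (hG : ∀ x, 0 ≤ G x) (hh : Integrable h μ) (hh0 : ∀ x, 0 ≤ h x) :
    -∫ x, h x ∂μ ≤ ∫ x, (G x - h x) ∂μ := by
  by_cases hi : Integrable (fun x => G x - h x) μ
  · rw [← integral_neg]
    exact integral_mono hh.neg hi fun x => by simpa using hG x
  · rw [integral_undef hi]
    simpa using integral_nonneg hh0

/-- The loss bound `Q(g,g)(v) ≥ -B (∫ g) g(v)` holds for every `v`: wherever the gain is not
integrable the Bochner integral takes the value `0`, which also satisfies the bound. -/
theorem Qν_ge (p : ℝ) (ν : Measure ℝ) [IsFiniteMeasure ν] {g : ℝ → ℝ} (hg : ∀ v, 0 ≤ g v)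
    (hi : Integrable g) (v : ℝ) : -(ν.real univ * (∫ w, g w) * g v) ≤ Qν p ν g v := by
  unfold Qν
  have h1 : ∀ w, -(ν.real univ * (g v * g w)) ≤ ∫ θ, (gain p g v w θ - g v * g w) ∂ν := fun w => by
    have := integral_sub_const_ge (μ := ν) (G := gain p g v w) (h := fun _ => g v * g w)
      (gain_nonneg hg v w) (integrable_const _) (fun _ => mul_nonneg (hg v) (hg w))
    simpa using this
  have h2 : Integrable fun w => ν.real univ * (g v * g w) := (hi.const_mul _).const_mul _
  have h3 := integral_sub_const_ge (μ := volume)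
    (G := fun w => (∫ θ, (gain p g v w θ - g v * g w) ∂ν) + ν.real univ * (g v * g w))
    (fun w => by linarith [h1 w]) h2
    (fun w => mul_nonneg measureReal_nonneg (mul_nonneg (hg v) (hg w)))
  simp only [add_sub_cancel_right] at h3
  refine le_trans (le_of_eq ?_) h3
  rw [integral_const_mul, integral_const_mul]
  ring

theorem Qν_eq (p : ℝ) (ν : Measure ℝ) [IsFiniteMeasure ν] {g : ℝ → ℝ} (hg : ∀ v, 0 ≤ g v)
    (hm : Measurable g) (hi : Integrable g) {v : ℝ} (hv : Qplus p ν g v ≠ ∞) :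
    Qν p ν g v = (Qplus p ν g v).toReal - ν.real univ * (∫ w, g w) * g v := by
  have hmG : Measurable fun z : ℝ × ℝ => gain p g v z.1 z.2 :=
    measurable_gain p (g := fun _ => g) (x := id) (by unfold Function.uncurry; fun_prop)
      measurable_id measurable_const measurable_fst measurable_snd
  have hQ : Qplus p ν g v = ∫⁻ z, ENNReal.ofReal (gain p g v z.1 z.2) ∂(volume.prod ν) := by
    rw [lintegral_prod _ (by fun_prop)]; rfl
  have hGi : Integrable (fun z : ℝ × ℝ => gain p g v z.1 z.2) (volume.prod ν) := by
    refine ⟨hmG.aestronglyMeasurable, ?_⟩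
    rw [hasFiniteIntegral_iff_ofReal (Eventually.of_forall fun z => gain_nonneg hg _ _ _), ← hQ]
    exact lt_top_iff_ne_top.2 hv
  have hLi : Integrable (fun z : ℝ × ℝ => g v * g z.1) (volume.prod ν) :=
    (hi.const_mul (g v)).comp_fst ν
  have h1 := integral_prod _ (hGi.sub hLi)
  have h2 := integral_prod _ hLi
  simp only [Pi.sub_apply] at h1
  rw [Qν, ← h1, integral_sub hGi hLi, h2, hQ,
    integral_eq_lintegral_of_nonneg_ae (Eventually.of_forall fun z => gain_nonneg hg _ _ _)
      hmG.aestronglyMeasurable]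
  simp only [integral_const, smul_eq_mul, integral_const_mul]
  ring

theorem measurable_Qplus (p : ℝ) (ν : Measure ℝ) [IsFiniteMeasure ν] {g : ℝ → ℝ}
    (hm : Measurable g) : Measurable (Qplus p ν g) := by
  unfold Qplus
  have h : Measurable fun z : (ℝ × ℝ) × ℝ => gain p g z.1.1 z.1.2 z.2 :=
    measurable_gain p (g := fun _ => g) (x := id) (by unfold Function.uncurry; fun_prop)
      measurable_id (by fun_prop) (by fun_prop) (by fun_prop)
  have h2 : Measurable fun z : ℝ × ℝ => ∫⁻ θ, ENNReal.ofReal (gain p g z.1 z.2 θ) ∂ν :=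
    h.ennreal_ofReal.lintegral_prod_right'
  exact h2.lintegral_prod_right'

/-- The inverse collision as a linear map of the plane. -/
def preMap (p θ : ℝ) : (ℝ × ℝ) →ₗ[ℝ] (ℝ × ℝ) :=
  Matrix.toLin (Module.Basis.finTwoProd ℝ) (Module.Basis.finTwoProd ℝ)
    !![ccoef p θ / chi p θ, scoef p θ / chi p θ; -(scoef p θ) / chi p θ, ccoef p θ / chi p θ]

theorem preMap_apply (p θ : ℝ) (z : ℝ × ℝ) :
    preMap p θ z = (vpre p θ z.1 z.2, wpre p θ z.1 z.2) := by
  rw [preMap, Matrix.toLin_finTwoProd_apply]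
  unfold vpre wpre
  ext <;> simp <;> ring

theorem det_preMap (p : ℝ) (hp : 0 < p) (θ : ℝ) : LinearMap.det (preMap p θ) = (chi p θ)⁻¹ := by
  have h := chi_pos p θ
  rw [preMap, LinearMap.det_toLin, Matrix.det_fin_two_of]
  field_simp
  rw [chi_eq p hp]; ring

/-- Change of variables for a fixed angle: the factor `χ⁻¹` is the Jacobian of the inverse
collision. -/
theorem lintegral_gain (p : ℝ) (hp : 0 < p) {g : ℝ → ℝ} (hg : ∀ v, 0 ≤ g v) (hm : Measurable g)
    {φ : ℝ → ℝ≥0∞} (hφ : Measurable φ) (θ : ℝ) :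
    ∫⁻ z : ℝ × ℝ, φ z.1 * ENNReal.ofReal (gain p g z.1 z.2 θ) =
      ∫⁻ z : ℝ × ℝ, φ (ccoef p θ * z.1 - scoef p θ * z.2) *
        (ENNReal.ofReal (g z.1) * ENNReal.ofReal (g z.2)) := by
  have hχ := chi_pos p θ
  set F : ℝ × ℝ → ℝ≥0∞ := fun z => φ (ccoef p θ * z.1 - scoef p θ * z.2) *
    (ENNReal.ofReal (g z.1) * ENNReal.ofReal (g z.2)) with hF
  have hFm : Measurable F := by fun_prop
  have hT : Measurable (preMap p θ) := by
    have : (preMap p θ : ℝ × ℝ → ℝ × ℝ) = fun z => (vpre p θ z.1 z.2, wpre p θ z.1 z.2) :=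
      funext (preMap_apply p θ)
    rw [this]; unfold vpre wpre; fun_prop
  have h1 : ∫⁻ z, F z ∂(Measure.map (preMap p θ) volume) = ∫⁻ z, F (preMap p θ z) :=
    lintegral_map hFm hT
  rw [Measure.map_linearMap_addHaar_eq_smul_addHaar _
    (by rw [det_preMap p hp]; exact (inv_pos.2 hχ).ne'), det_preMap p hp, inv_inv,
    abs_of_pos hχ, lintegral_smul_measure] at h1
  have h2 : ∀ z : ℝ × ℝ, φ z.1 * ENNReal.ofReal (gain p g z.1 z.2 θ) =
      ENNReal.ofReal (chi p θ)⁻¹ * F (preMap p θ z) := fun z => by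
    have hv : ccoef p θ * vpre p θ z.1 z.2 - scoef p θ * wpre p θ z.1 z.2 = z.1 := by
      unfold vpre wpre
      field_simp
      rw [chi_eq p hp]; ring
    simp only [hF, preMap_apply, hv, gain]
    rw [ENNReal.ofReal_mul (mul_nonneg (inv_nonneg.2 hχ.le) (hg _)),
      ENNReal.ofReal_mul (inv_nonneg.2 hχ.le)]
    ring
  simp_rw [h2]
  have hFT : Measurable fun z => F (preMap p θ z) := hFm.comp hT
  rw [lintegral_const_mul _ hFT, ← h1, smul_eq_mul, ← mul_assoc,
    ← ENNReal.ofReal_mul (inv_nonneg.2 hχ.le), inv_mul_cancel₀ hχ.ne', ENNReal.ofReal_one, one_mul]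

theorem lintegral_mul_Qplus (p : ℝ) (hp : 0 < p) (ν : Measure ℝ) [IsFiniteMeasure ν] {g : ℝ → ℝ}
    (hg : ∀ v, 0 ≤ g v) (hm : Measurable g) {φ : ℝ → ℝ≥0∞} (hφ : Measurable φ) :
    ∫⁻ v, φ v * Qplus p ν g v = ∫⁻ θ, (∫⁻ z : ℝ × ℝ, φ (ccoef p θ * z.1 - scoef p θ * z.2) *
        (ENNReal.ofReal (g z.1) * ENNReal.ofReal (g z.2))) ∂ν := by
  have h : Measurable fun z : (ℝ × ℝ) × ℝ => gain p g z.1.1 z.1.2 z.2 :=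
    measurable_gain p (g := fun _ => g) (x := id) (by unfold Function.uncurry; fun_prop)
      measurable_id (by fun_prop) (by fun_prop) (by fun_prop)
  have h2 : Measurable fun z : ℝ × ℝ => ∫⁻ θ, ENNReal.ofReal (gain p g z.1 z.2 θ) ∂ν :=
    h.ennreal_ofReal.lintegral_prod_right'
  calc ∫⁻ v, φ v * Qplus p ν g v
      = ∫⁻ v, ∫⁻ w, φ v * ∫⁻ θ, ENNReal.ofReal (gain p g v w θ) ∂ν := by
        refine lintegral_congr fun v => ?_
        have h3 : Measurable fun w => ∫⁻ θ, ENNReal.ofReal (gain p g v w θ) ∂ν :=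
          h2.comp measurable_prodMk_left
        rw [Qplus, lintegral_const_mul _ h3]
    _ = ∫⁻ z : ℝ × ℝ, φ z.1 * ∫⁻ θ, ENNReal.ofReal (gain p g z.1 z.2 θ) ∂ν := by
        rw [Measure.volume_eq_prod, lintegral_prod _ (by fun_prop)]
    _ = ∫⁻ z : ℝ × ℝ, ∫⁻ θ, φ z.1 * ENNReal.ofReal (gain p g z.1 z.2 θ) ∂ν := by
        refine lintegral_congr fun z => ?_
        have h3 : Measurable fun θ => ENNReal.ofReal (gain p g z.1 z.2 θ) :=
          (h.comp measurable_prodMk_left).ennreal_ofReal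
        rw [lintegral_const_mul _ h3]
    _ = ∫⁻ θ, (∫⁻ z : ℝ × ℝ, φ z.1 * ENNReal.ofReal (gain p g z.1 z.2 θ)) ∂ν := by
        rw [lintegral_lintegral_swap]
        unfold Function.uncurry
        exact ((hφ.comp (measurable_fst.comp measurable_fst)).mul h.ennreal_ofReal).aemeasurable
    _ = _ := lintegral_congr fun θ => lintegral_gain p hp hg hm hφ θ

theorem lintegral_Qplus (p : ℝ) (hp : 0 < p) (ν : Measure ℝ) [IsFiniteMeasure ν] {g : ℝ → ℝ}
    (hg : ∀ v, 0 ≤ g v) (hm : Measurable g) :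
    ∫⁻ v, Qplus p ν g v = ν univ * (∫⁻ v, ENNReal.ofReal (g v)) ^ 2 := by
  have h := lintegral_mul_Qplus p hp ν hg hm (φ := fun _ => 1) measurable_const
  simp only [one_mul] at h
  have h2 := lintegral_prod_mul (μ := volume) (ν := volume) (f := fun v => ENNReal.ofReal (g v))
    (g := fun v => ENNReal.ofReal (g v)) (by fun_prop) (by fun_prop)
  rw [h, Measure.volume_eq_prod, h2, lintegral_const]
  ring

/-- Second moment of the gain term. The cross term `-2 c s v w` integrates to zero because `c s`
is odd in `θ`; in `ℝ≥0∞` this is seen by averaging over `θ` and `-θ`. -/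
theorem lintegral_sq_mul_Qplus (p : ℝ) (hp : 0 < p) (ν : Measure ℝ) [IsFiniteMeasure ν]
    (hν : ν.map (fun θ => -θ) = ν) {g : ℝ → ℝ} (hg : ∀ v, 0 ≤ g v) (hm : Measurable g) :
    ∫⁻ v, ENNReal.ofReal (v ^ 2) * Qplus p ν g v =
      (∫⁻ θ, ENNReal.ofReal (chi p θ) ∂ν) * (∫⁻ v, ENNReal.ofReal (g v)) *
        ∫⁻ v, ENNReal.ofReal (v ^ 2 * g v) := by
  rw [lintegral_mul_Qplus p hp ν hg hm (by fun_prop)]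
  set J : ℝ → ℝ≥0∞ := fun θ => ∫⁻ z : ℝ × ℝ,
    ENNReal.ofReal ((ccoef p θ * z.1 - scoef p θ * z.2) ^ 2) *
        (ENNReal.ofReal (g z.1) * ENNReal.ofReal (g z.2)) with hJ
  set M := ∫⁻ v, ENNReal.ofReal (g v)
  set E := ∫⁻ v, ENNReal.ofReal (v ^ 2 * g v)
  have hJm : Measurable J := by
    refine Measurable.lintegral_prod_right' (f := fun x : ℝ × (ℝ × ℝ) =>
      ENNReal.ofReal ((ccoef p x.1 * x.2.1 - scoef p x.1 * x.2.2) ^ 2) *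
        (ENNReal.ofReal (g x.2.1) * ENNReal.ofReal (g x.2.2))) ?_
    fun_prop
  have hc : ∀ θ, ccoef p (-θ) = ccoef p θ := fun θ => by simp [ccoef]
  have hs : ∀ θ, scoef p (-θ) = -scoef p θ := fun θ => by simp [scoef]
  have hsum : ∀ θ, J θ + J (-θ) = 2 * (ENNReal.ofReal (chi p θ) * M * E) := by
    intro θ
    have hE1 : ∫⁻ z : ℝ × ℝ, ENNReal.ofReal (z.1 ^ 2 * g z.1) * ENNReal.ofReal (g z.2) = E * M := by
      rw [Measure.volume_eq_prod]
      exact lintegral_prod_mul (f := fun v => ENNReal.ofReal (v ^ 2 * g v))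
        (g := fun v => ENNReal.ofReal (g v)) (by fun_prop) (by fun_prop)
    have hE2 : ∫⁻ z : ℝ × ℝ, ENNReal.ofReal (g z.1) * ENNReal.ofReal (z.2 ^ 2 * g z.2) = M * E := by
      rw [Measure.volume_eq_prod]
      exact lintegral_prod_mul (f := fun v => ENNReal.ofReal (g v))
        (g := fun v => ENNReal.ofReal (v ^ 2 * g v)) (by fun_prop) (by fun_prop)
    calc J θ + J (-θ)
        = ∫⁻ z : ℝ × ℝ, (2 * ENNReal.ofReal (ccoef p θ ^ 2) *
            (ENNReal.ofReal (z.1 ^ 2 * g z.1) * ENNReal.ofReal (g z.2)) +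
            2 * ENNReal.ofReal (scoef p θ ^ 2) *
            (ENNReal.ofReal (g z.1) * ENNReal.ofReal (z.2 ^ 2 * g z.2))) := by
          simp only [hJ]
          rw [← lintegral_add_left (by fun_prop)]
          refine lintegral_congr fun z => ?_
          have e2 : (2 : ℝ≥0∞) = ENNReal.ofReal 2 := by simp
          rw [hc, hs, e2]
          have := hg z.1
          have := hg z.2
          simp only [← ENNReal.ofReal_mul, sq_nonneg, hg, zero_le_two, mul_nonneg]
          rw [← ENNReal.ofReal_add (by positivity) (by positivity),
            ← ENNReal.ofReal_add (by positivity) (by positivity)]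
          congr 1; ring
      _ = _ := by
          rw [lintegral_add_left (by fun_prop), lintegral_const_mul _ (by fun_prop),
            lintegral_const_mul _ (by fun_prop), hE1, hE2, chi_eq p hp,
            ENNReal.ofReal_add (sq_nonneg _) (sq_nonneg _)]
          ring
  have hneg : ∫⁻ θ, J (-θ) ∂ν = ∫⁻ θ, J θ ∂ν := by
    conv_rhs => rw [← hν]
    rw [lintegral_map hJm measurable_neg]
  have h2 : 2 * ∫⁻ θ, J θ ∂ν = 2 * ((∫⁻ θ, ENNReal.ofReal (chi p θ) ∂ν) * M * E) := by
    rw [two_mul]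
    nth_rewrite 2 [← hneg]
    rw [← lintegral_add_left hJm]
    simp_rw [hsum]
    rw [lintegral_const_mul _ (by fun_prop), lintegral_mul_const _ (by fun_prop),
      lintegral_mul_const _ (by fun_prop)]
  exact (ENNReal.mul_right_inj two_ne_zero ENNReal.ofNat_ne_top).1 h2

/-! ### Balance laws for regular solutions -/

/-- A jointly measurable, nonnegative solution `g v t` of `∂ₜ g = Q(g,g)` on `[0,∞)`, valid for
almost every velocity, with finite mass and extended to negative times by its initial value. -/
structure IsRegularSol (p : ℝ) (ν : Measure ℝ) (g : ℝ → ℝ → ℝ) : Prop where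
  nonneg : ∀ v t, 0 ≤ g v t
  meas : Measurable (Function.uncurry g)
  int : ∀ t, Integrable fun v => g v t
  cont : ∀ v, Continuous (g v)
  past : ∀ v, ∀ t ≤ 0, g v t = g v 0
  deriv : ∀ᵐ v, ∀ t, 0 ≤ t →
    HasDerivWithinAt (g v) (Qν p ν (fun w => g w t) v) (Ici 0) t

/-- The mass `∫ g(v,t) dv`, as an extended nonnegative number. -/
def mass (g : ℝ → ℝ → ℝ) (t : ℝ) : ℝ≥0∞ := ∫⁻ v, ENNReal.ofReal (g v t)

/-- The energy `∫ v² g(v,t) dv`, as an extended nonnegative number. -/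
def energy (g : ℝ → ℝ → ℝ) (t : ℝ) : ℝ≥0∞ := ∫⁻ v, ENNReal.ofReal (v ^ 2 * g v t)

section
variable {p : ℝ} {ν : Measure ℝ} {g : ℝ → ℝ → ℝ}

theorem IsRegularSol.meas_left (h : IsRegularSol p ν g) (t : ℝ) : Measurable fun v => g v t :=
  h.meas.comp measurable_prodMk_right

theorem IsRegularSol.mass_ne_top (h : IsRegularSol p ν g) (t : ℝ) : mass g t ≠ ∞ := by
  have := (h.int t).2
  rw [hasFiniteIntegral_iff_ofReal (Eventually.of_forall fun v => h.nonneg v t)] at this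
  exact this.ne

theorem IsRegularSol.integral_eq (h : IsRegularSol p ν g) (t : ℝ) :
    ∫ v, g v t = (mass g t).toReal :=
  integral_eq_lintegral_of_nonneg_ae (Eventually.of_forall fun v => h.nonneg v t)
    (h.meas_left t).aestronglyMeasurable

theorem IsRegularSol.measurable_mass (h : IsRegularSol p ν g) : Measurable (mass g) := by
  have hm := h.meas
  unfold mass
  refine Measurable.lintegral_prod_left' (f := fun z : ℝ × ℝ => ENNReal.ofReal (g z.1 z.2)) ?_
  exact hm.ennreal_ofReal

theorem IsRegularSol.measurable_energy (h : IsRegularSol p ν g) : Measurable (energy g) := by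
  have hm : Measurable fun z : ℝ × ℝ => g z.1 z.2 := h.meas
  unfold energy
  refine Measurable.lintegral_prod_left'
    (f := fun z : ℝ × ℝ => ENNReal.ofReal (z.1 ^ 2 * g z.1 z.2)) ?_
  fun_prop

variable [IsFiniteMeasure ν]

theorem IsRegularSol.measurable_Qν (h : IsRegularSol p ν g) :
    Measurable fun z : ℝ × ℝ => Qν p ν (fun w => g w z.2) z.1 := by
  have hm : Measurable fun z : ℝ × ℝ => g z.1 z.2 := h.meas
  have h1 : Measurable fun x : ((ℝ × ℝ) × ℝ) × ℝ =>
      gain p (fun w => g w x.1.1.2) x.1.1.1 x.1.2 x.2 := by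
    have e1 : Measurable fun x : ((ℝ × ℝ) × ℝ) × ℝ => vpre p x.2 x.1.1.1 x.1.2 := by
      unfold vpre; fun_prop
    have e2 : Measurable fun x : ((ℝ × ℝ) × ℝ) × ℝ => wpre p x.2 x.1.1.1 x.1.2 := by
      unfold wpre; fun_prop
    unfold gain
    fun_prop
  have h2 : StronglyMeasurable fun x : ((ℝ × ℝ) × ℝ) × ℝ =>
      gain p (fun w => g w x.1.1.2) x.1.1.1 x.1.2 x.2 - g x.1.1.1 x.1.1.2 * g x.1.2 x.1.1.2 :=
    Measurable.stronglyMeasurable (by fun_prop)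
  exact (h2.integral_prod_right' (ν := ν)).integral_prod_right'.measurable

/-- Weighted balance law on a time interval where the mass is at most `K`. The factor
`exp (B K t)` makes `t ↦ exp (B K t) g(v,t)` nondecreasing for almost every `v`, so that the
fundamental theorem of calculus holds without an integrability assumption on `∂ₜ g`, and
Tonelli's theorem gives the integrated identity. -/
theorem IsRegularSol.balance (h : IsRegularSol p ν g) (hp : 0 < p) {a b : ℝ}
    (ha : 0 ≤ a) (hab : a ≤ b) {K : ℝ≥0} (hK : ∀ t ∈ Icc a b, mass g t ≤ K) {φ : ℝ → ℝ≥0∞}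
    (hφ : Measurable φ) :
    ENNReal.ofReal (Real.exp (ν.real univ * K * b)) * ∫⁻ v, φ v * ENNReal.ofReal (g v b) =
      ENNReal.ofReal (Real.exp (ν.real univ * K * a)) * (∫⁻ v, φ v * ENNReal.ofReal (g v a)) +
      ∫⁻ t in Ioc a b, ENNReal.ofReal (Real.exp (ν.real univ * K * t)) *
        ((∫⁻ v, φ v * Qplus p ν (fun w => g w t) v) +
          ENNReal.ofReal (ν.real univ * (K - (mass g t).toReal)) *
            ∫⁻ v, φ v * ENNReal.ofReal (g v t)) := by
  set B := ν.real univ with hB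
  have hB0 : 0 ≤ B := measureReal_nonneg
  have hm : Measurable fun z : ℝ × ℝ => g z.1 z.2 := h.meas
  have hMK : ∀ t ∈ Icc a b, (mass g t).toReal ≤ K := fun t ht =>
    ENNReal.toReal_le_of_le_ofReal K.2 (by simpa using hK t ht)
  set D : ℝ → ℝ → ℝ := fun v t => Real.exp (B * K * t) *
    (Qν p ν (fun w => g w t) v + B * K * g v t) with hD
  have hDm : Measurable fun z : ℝ × ℝ => D z.1 z.2 := by
    have := h.measurable_Qν
    fun_prop
  have hDpos : ∀ v, ∀ t ∈ Icc a b, 0 ≤ D v t := by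
    intro v t ht
    have h1 := Qν_ge p ν (fun w => h.nonneg w t) (h.int t) v
    rw [h.integral_eq t] at h1
    have h2 : B * (mass g t).toReal * g v t ≤ B * K * g v t :=
      mul_le_mul_of_nonneg_right (mul_le_mul_of_nonneg_left (hMK t ht) hB0) (h.nonneg v t)
    exact mul_nonneg (Real.exp_nonneg _) (by linarith)
  have hftc : ∀ᵐ v, ENNReal.ofReal (Real.exp (B * K * b)) * (φ v * ENNReal.ofReal (g v b)) =
      ENNReal.ofReal (Real.exp (B * K * a)) * (φ v * ENNReal.ofReal (g v a)) +
        ∫⁻ t in Ioc a b, φ v * ENNReal.ofReal (D v t) := by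
    filter_upwards [h.deriv] with v hv
    have h1 := ofReal_eq_add_lintegral_deriv (u := fun t => Real.exp (B * K * t) * g v t)
      (u' := D v) hab (Continuous.continuousOn (by have := h.cont v; fun_prop))
      (fun t ht => by
        have he : HasDerivWithinAt (fun t => Real.exp (B * K * t))
            (Real.exp (B * K * t) * (B * K * 1)) (Ioi t) t :=
          (((hasDerivAt_id t).const_mul (B * K)).exp).hasDerivWithinAt
        have h2 := (hv t (ha.trans ht.1.le)).mono
          (fun s hs => (ha.trans ht.1.le).trans (le_of_lt hs) : Ioi t ⊆ Ici 0)
        exact (he.mul h2).congr_deriv (by simp only [hD]; ring))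
      (fun t ht => hDpos v t ⟨ht.1.le, ht.2⟩)
      (mul_nonneg (Real.exp_nonneg _) (h.nonneg v a))
    rw [ENNReal.ofReal_mul (Real.exp_nonneg _), ENNReal.ofReal_mul (Real.exp_nonneg _)] at h1
    have h3 : Measurable fun t => ENNReal.ofReal (D v t) :=
      (hDm.comp measurable_prodMk_left).ennreal_ofReal
    rw [lintegral_const_mul _ h3, mul_left_comm, h1]
    ring
  have hga := h.meas_left a
  have hgb := h.meas_left b
  have hswap : ∫⁻ v, ∫⁻ t in Ioc a b, φ v * ENNReal.ofReal (D v t) =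
      ∫⁻ t in Ioc a b, ∫⁻ v, φ v * ENNReal.ofReal (D v t) := by
    rw [lintegral_lintegral_swap]
    unfold Function.uncurry
    exact Measurable.aemeasurable (by fun_prop)
  have hint : ∀ t ∈ Ioc a b, ∫⁻ v, φ v * ENNReal.ofReal (D v t) =
      ENNReal.ofReal (Real.exp (B * K * t)) *
        ((∫⁻ v, φ v * Qplus p ν (fun w => g w t) v) +
          ENNReal.ofReal (B * (K - (mass g t).toReal)) *
            ∫⁻ v, φ v * ENNReal.ofReal (g v t)) := by
    intro t ht
    have hgt := h.meas_left t
    have hQm := measurable_Qplus p ν hgt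
    have hfin : ∀ᵐ v, Qplus p ν (fun w => g w t) v < ∞ := by
      refine ae_lt_top hQm ?_
      rw [lintegral_Qplus p hp ν (fun w => h.nonneg w t) hgt]
      exact ENNReal.mul_ne_top (measure_ne_top _ _) (ENNReal.pow_ne_top (h.mass_ne_top t))
    have h1 : ∀ᵐ v, φ v * ENNReal.ofReal (D v t) = ENNReal.ofReal (Real.exp (B * K * t)) *
        (φ v * Qplus p ν (fun w => g w t) v + ENNReal.ofReal (B * (K - (mass g t).toReal)) *
            (φ v * ENNReal.ofReal (g v t))) := by
      filter_upwards [hfin] with v hv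
      have hKM : 0 ≤ B * (K - (mass g t).toReal) :=
        mul_nonneg hB0 (sub_nonneg.2 (hMK t ⟨ht.1.le, ht.2⟩))
      have h2 : Qν p ν (fun w => g w t) v + B * K * g v t =
          (Qplus p ν (fun w => g w t) v).toReal + B * (K - (mass g t).toReal) * g v t := by
        rw [Qν_eq p ν (fun w => h.nonneg w t) hgt (h.int t) hv.ne, h.integral_eq t]
        ring
      simp only [hD]
      rw [h2, ENNReal.ofReal_mul (Real.exp_nonneg _),
        ENNReal.ofReal_add ENNReal.toReal_nonneg (mul_nonneg hKM (h.nonneg v t)),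
        ENNReal.ofReal_toReal hv.ne, ENNReal.ofReal_mul hKM]
      ring
    rw [lintegral_congr_ae h1, lintegral_const_mul _ (by fun_prop),
      lintegral_add_left (by fun_prop), lintegral_const_mul _ (by fun_prop)]
  rw [← setLIntegral_congr_fun measurableSet_Ioc hint, ← hswap,
    ← lintegral_const_mul _ (by fun_prop), ← lintegral_const_mul _ (by fun_prop),
    ← lintegral_add_left (by fun_prop)]
  exact lintegral_congr_ae hftc

theorem IsRegularSol.mass_eq_of_bounded (h : IsRegularSol p ν g) (hp : 0 < p) {a b : ℝ}
    (ha : 0 ≤ a) (hab : a ≤ b) {K : ℝ≥0} (hK : ∀ t ∈ Icc a b, mass g t ≤ K) :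
    mass g a = mass g b := by
  set B := ν.real univ with hB
  have hB0 : 0 ≤ B := measureReal_nonneg
  have hMK : ∀ t ∈ Icc a b, (mass g t).toReal ≤ K := fun t ht =>
    ENNReal.toReal_le_of_le_ofReal K.2 (by simpa using hK t ht)
  have hofM : ∀ t, mass g t = ENNReal.ofReal (mass g t).toReal := fun t =>
    (ENNReal.ofReal_toReal (h.mass_ne_top t)).symm
  have hν : ν univ = ENNReal.ofReal B := by simp [hB]
  have hmm := h.measurable_mass
  have key := eq_exp_of_lintegral_eq (N := fun t => Real.exp (B * K * t) * (mass g t).toReal)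
    (k := B * K) (by positivity) hab (fun t => by positivity) (by fun_prop) (fun t ht => by
      have h1 := h.balance hp ha ht.1 (fun s hs => hK s ⟨hs.1, hs.2.trans ht.2⟩)
        (φ := fun _ => 1) measurable_const
      simp only [one_mul] at h1
      change ENNReal.ofReal (Real.exp (B * K * t)) * mass g t =
        ENNReal.ofReal (Real.exp (B * K * a)) * mass g a + _ at h1
      rw [ENNReal.ofReal_mul (Real.exp_nonneg _), ENNReal.ofReal_mul (Real.exp_nonneg _),
        ← hofM, ← hofM, h1]
      congr 1
      refine setLIntegral_congr_fun measurableSet_Ioc fun s hs => ?_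
      have hs' : s ∈ Icc a b := ⟨hs.1.le, hs.2.trans ht.2⟩
      have hKs := hMK s hs'
      have hr : (0 : ℝ) ≤ (mass g s).toReal := ENNReal.toReal_nonneg
      rw [lintegral_Qplus p hp ν (fun w => h.nonneg w s) (h.meas_left s)]
      change ENNReal.ofReal (Real.exp (B * K * s)) *
        (ν univ * mass g s ^ 2 + ENNReal.ofReal (B * (K - (mass g s).toReal)) * mass g s) = _
      rw [hν]
      generalize hx : (mass g s).toReal = x at *
      rw [hofM s, hx]
      rw [← ENNReal.ofReal_pow hr, ← ENNReal.ofReal_mul hB0,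
        ← ENNReal.ofReal_mul (mul_nonneg hB0 (sub_nonneg.2 hKs)),
        ← ENNReal.ofReal_add (by positivity)
          (mul_nonneg (mul_nonneg hB0 (sub_nonneg.2 hKs)) hr),
        ← ENNReal.ofReal_mul (Real.exp_nonneg _)]
      congr 1; ring)
  have e : Real.exp (B * K * a) * Real.exp (B * K * (b - a)) = Real.exp (B * K * b) := by
    rw [← Real.exp_add]; congr 1; ring
  have key2 : (mass g b).toReal = (mass g a).toReal := by
    refine mul_left_cancel₀ (Real.exp_pos (B * K * b)).ne' ?_
    rw [key, ← e]; ring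
  rw [hofM a, hofM b, key2]

theorem IsRegularSol.mass_const (h : IsRegularSol p ν g) (hp : 0 < p) {t : ℝ} (ht : 0 ≤ t) :
    mass g t = mass g 0 := by
  have hpast : ∀ t, mass g t = mass g (max t 0) := fun t => by
    rcases le_total t 0 with h0 | h0
    · rw [max_eq_right h0]; unfold mass; simp_rw [h.past _ t h0]
    · rw [max_eq_left h0]
  refine (eq_of_bounded_const h.mass_ne_top (fun K => ?_) (fun a b hab K hK => ?_) ht).symm
  · refine IsSeqClosed.isClosed fun x y hx hxy => ?_
    have h1 : ∀ v, liminf (fun n => ENNReal.ofReal (g v (x n))) atTop = ENNReal.ofReal (g v y) :=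
      fun v => ((ENNReal.continuous_ofReal.comp (h.cont v)).tendsto y |>.comp hxy).liminf_eq
    calc mass g y = ∫⁻ v, liminf (fun n => ENNReal.ofReal (g v (x n))) atTop := by
          simp_rw [h1]; rfl
      _ ≤ liminf (fun n => mass g (x n)) atTop :=
          lintegral_liminf_le fun n => (h.meas_left (x n)).ennreal_ofReal
      _ ≤ K := liminf_le_of_le (by isBoundedDefault) fun c hc => by
          obtain ⟨n, hn⟩ := hc.exists
          exact hn.trans (hx n)
  · rw [hpast a, hpast b]
    rcases le_total b 0 with hb | hb
    · rw [max_eq_right hb, max_eq_right (hab.trans hb)]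
    · refine h.mass_eq_of_bounded hp (le_max_right _ _) (max_le_max hab le_rfl) (K := K)
        fun s hs => hK s ⟨(le_max_left _ _).trans hs.1, ?_⟩
      simpa [hb] using hs.2

theorem IsRegularSol.energy_eq (h : IsRegularSol p ν g) (hp : 0 < p)
    (hν : ν.map (fun θ => -θ) = ν) (hM : mass g 0 = 1) (hE : ∀ t, energy g t ≠ ∞) {t : ℝ}
    (ht : 0 ≤ t) :
    (energy g t).toReal = (energy g 0).toReal *
      Real.exp (((∫⁻ θ, ENNReal.ofReal (chi p θ) ∂ν).toReal - ν.real univ) * t) := by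
  set B := ν.real univ with hB
  set C := ∫⁻ θ, ENNReal.ofReal (chi p θ) ∂ν with hC
  have hCfin : C ≠ ∞ := by
    refine ne_top_of_le_ne_top (measure_ne_top ν univ) ?_
    calc C ≤ ∫⁻ _, 1 ∂ν := lintegral_mono fun θ => by
          simpa using ENNReal.ofReal_le_ofReal (chi_le_one p hp θ)
      _ = ν univ := by simp
  have hofE : ∀ t, energy g t = ENNReal.ofReal (energy g t).toReal := fun t =>
    (ENNReal.ofReal_toReal (hE t)).symm
  have hen : ∀ t, ∫⁻ v, ENNReal.ofReal (v ^ 2) * ENNReal.ofReal (g v t) = energy g t := fun t => by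
    unfold energy
    refine lintegral_congr fun v => ?_
    rw [ENNReal.ofReal_mul (sq_nonneg v)]
  have hem := h.measurable_energy
  have key := eq_exp_of_lintegral_eq (N := fun t => Real.exp (B * t) * (energy g t).toReal)
    (k := C.toReal) (by positivity) ht (fun t => by positivity) (by fun_prop) (fun s hs => by
      have h1 := h.balance hp le_rfl hs.1 (K := 1)
        (fun r hr => by rw [h.mass_const hp hr.1, hM]; simp)
        (φ := fun v => ENNReal.ofReal (v ^ 2)) (by fun_prop)
      simp only [hen, NNReal.coe_one, mul_one, ← hB] at h1
      rw [ENNReal.ofReal_mul (Real.exp_nonneg _), ENNReal.ofReal_mul (Real.exp_nonneg _),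
        ← hofE, ← hofE, h1]
      congr 1
      refine setLIntegral_congr_fun measurableSet_Ioc fun r hr => ?_
      have hMr : mass g r = 1 := by rw [h.mass_const hp hr.1.le, hM]
      have hsq := lintegral_sq_mul_Qplus p hp ν hν (fun w => h.nonneg w r) (h.meas_left r)
      change _ = C * mass g r * energy g r at hsq
      rw [hsq, hMr, ENNReal.ofReal_mul ENNReal.toReal_nonneg,
        ENNReal.ofReal_mul (Real.exp_nonneg _), ← hofE, ENNReal.ofReal_toReal hCfin]
      simp
      ring)
  simp only [mul_zero, Real.exp_zero, one_mul, sub_zero] at key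
  refine mul_left_cancel₀ (Real.exp_pos (B * t)).ne' ?_
  rw [key, mul_left_comm, ← Real.exp_add]
  congr 2; ring

end

/-! ### Angular measure and measurable representatives -/

/-- The angular measure `b(θ) dθ` on `[-π/2, π/2]`. -/
def angular (b : ℝ → ℝ) : Measure ℝ :=
  (volume.restrict (Icc (-(π / 2)) (π / 2))).withDensity fun θ => ENNReal.ofReal (b θ)

section
variable {b : ℝ → ℝ}

theorem isFiniteMeasure_angular (hb : IntegrableOn b (Icc (-(π / 2)) (π / 2))) :
    IsFiniteMeasure (angular b) :=
  isFiniteMeasure_withDensity_ofReal hb.2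

theorem integral_angular (hb : IntegrableOn b (Icc (-(π / 2)) (π / 2))) (h0 : ∀ θ, 0 ≤ b θ)
    (h : ℝ → ℝ) : ∫ θ, h θ ∂(angular b) = ∫ θ in (-(π / 2))..(π / 2), b θ * h θ := by
  rw [angular, integral_withDensity_eq_integral_toReal_smul₀ hb.1.aemeasurable.ennreal_ofReal
    (Eventually.of_forall fun _ => ENNReal.ofReal_lt_top),
    intervalIntegral.integral_of_le (by linarith [Real.pi_pos]), integral_Icc_eq_integral_Ioc]
  simp only [ENNReal.toReal_ofReal (h0 _), smul_eq_mul]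

theorem map_neg_angular (he : ∀ θ, b θ = b (-θ)) :
    (angular b).map (fun θ => -θ) = angular b := by
  have h1 : angular b = volume.withDensity
      ((Icc (-(π / 2)) (π / 2)).indicator fun θ => ENNReal.ofReal (b θ)) := by
    rw [angular, withDensity_indicator measurableSet_Icc]
  ext S hS
  rw [Measure.map_apply measurable_neg hS, h1, withDensity_apply _ (measurable_neg hS),
    withDensity_apply _ hS, ← lintegral_indicator (measurable_neg hS), ← lintegral_indicator hS,
    ← lintegral_neg_eq_self]
  refine lintegral_congr fun θ => ?_
  have h2 : -θ ∈ Icc (-(π / 2)) (π / 2) ↔ θ ∈ Icc (-(π / 2)) (π / 2) := by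
    simp only [mem_Icc]; constructor <;> rintro ⟨h, h'⟩ <;> constructor <;> linarith
  have h3 : -θ ∈ Neg.neg ⁻¹' S ↔ θ ∈ S := by simp
  by_cases hS' : θ ∈ S
  · refine (indicator_of_mem (h3.2 hS') _).trans (Eq.trans ?_ (indicator_of_mem hS' _).symm)
    simp only [indicator, h2, ← he θ]
  · exact (indicator_of_notMem (fun h => hS' (h3.1 h)) _).trans (indicator_of_notMem hS' _).symm

theorem ae_angular_ne_zero (p : ℝ) : ∀ᵐ θ ∂(angular b), ccoef p θ ≠ 0 ∧ scoef p θ ≠ 0 := by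
  refine (withDensity_absolutelyContinuous _ _).ae_le ?_
  have h0 : ∀ x : ℝ, ∀ᵐ θ, θ ≠ x := fun x => by
    rw [ae_iff]; simp
  filter_upwards [ae_restrict_mem measurableSet_Icc, ae_restrict_of_ae (h0 0),
    ae_restrict_of_ae (h0 (π / 2)), ae_restrict_of_ae (h0 (-(π / 2)))] with θ hθ h1 h2 h3
  have hc : 0 < Real.cos θ :=
    Real.cos_pos_of_mem_Ioo ⟨lt_of_le_of_ne hθ.1 (Ne.symm h3), lt_of_le_of_ne hθ.2 h2⟩
  have hs : Real.sin θ ≠ 0 := fun hs => h1 <|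
    (Real.sin_eq_zero_iff_of_lt_of_lt (by linarith [hθ.1, Real.pi_pos])
      (by linarith [hθ.2, Real.pi_pos])).1 hs
  exact ⟨mul_ne_zero hc.ne' (Real.rpow_pos_of_pos (abs_pos.2 hc.ne') _).ne',
    mul_ne_zero hs (Real.rpow_pos_of_pos (abs_pos.2 hs) _).ne'⟩

theorem Qp_eq_Qν (p : ℝ) (hb : IntegrableOn b (Icc (-(π / 2)) (π / 2))) (h0 : ∀ θ, 0 ≤ b θ)
    (h : ℝ → ℝ) (v : ℝ) : Qp p b h v = Qν p (angular b) h v := by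
  unfold Qp Qν
  simp_rw [integral_angular hb h0, gain]

theorem ae_affine_notMem {N : Set ℝ} (hN : volume N = 0) (d : ℝ) {a : ℝ} (ha : a ≠ 0) :
    ∀ᵐ w : ℝ, d + a * w ∉ N := by
  rw [ae_iff]
  simp only [not_not]
  have h1 : {w : ℝ | d + a * w ∈ N} = (fun w => a * w) ⁻¹' ((fun x => d + x) ⁻¹' N) := rfl
  rw [h1, Real.volume_preimage_mul_left ha, measure_preimage_add, hN, mul_zero]

/-- Changing the density on a null set `N` does not affect the collision operator at velocities
outside `N`: for almost every angle, `w ↦ v**` and `w ↦ w**` are nonconstant affine maps. -/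
theorem Qν_congr (p : ℝ) (hb : IntegrableOn b (Icc (-(π / 2)) (π / 2))) {N : Set ℝ}
    (hNm : MeasurableSet N) (hN : volume N = 0) {h₁ h₂ : ℝ → ℝ} (heq : ∀ v ∉ N, h₁ v = h₂ v)
    {v : ℝ} (hv : v ∉ N) : Qν p (angular b) h₁ v = Qν p (angular b) h₂ v := by
  have := isFiniteMeasure_angular hb
  have h1 : ∀ᵐ w : ℝ, ∀ᵐ θ ∂(angular b), vpre p θ v w ∉ N ∧ wpre p θ v w ∉ N := by
    rw [Measure.ae_ae_comm (p := fun w θ => vpre p θ v w ∉ N ∧ wpre p θ v w ∉ N)]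
    · filter_upwards [ae_angular_ne_zero (b := b) p] with θ hθ
      have hχ := (chi_pos p θ).ne'
      filter_upwards [ae_affine_notMem hN (ccoef p θ * v / chi p θ) (div_ne_zero hθ.2 hχ),
        ae_affine_notMem hN (-(scoef p θ) * v / chi p θ) (div_ne_zero hθ.1 hχ)] with w h1 h2
      unfold vpre wpre
      exact ⟨by rwa [add_div, mul_div_right_comm (scoef p θ)],
        by rwa [add_div, mul_div_right_comm (ccoef p θ)]⟩
    · have e1 : Measurable fun x : ℝ × ℝ => vpre p x.2 v x.1 := by unfold vpre; fun_prop
      have e2 : Measurable fun x : ℝ × ℝ => wpre p x.2 v x.1 := by unfold wpre; fun_prop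
      exact (e1 hNm.compl).inter (e2 hNm.compl)
  have h2 : ∀ᵐ w : ℝ, w ∉ N := measure_eq_zero_iff_ae_notMem.1 hN
  unfold Qν
  refine integral_congr_ae ?_
  filter_upwards [h1, h2] with w hw hwN
  refine integral_congr_ae ?_
  filter_upwards [hw] with θ hθ
  simp only [gain, heq _ hθ.1, heq _ hθ.2, heq _ hwN, heq _ hv]

/-- A pointwise solution whose time slices are merely a.e. measurable agrees off a single null set
of velocities with a jointly measurable one. By continuity in time it suffices to discard the
exceptional sets of the rational times. -/
theorem exists_regularSol {p : ℝ} (hb : IntegrableOn b (Icc (-(π / 2)) (π / 2)))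
    (h0 : ∀ θ, 0 ≤ b θ) {f : ℝ → ℝ → ℝ} (hf0 : ∀ t ∈ Ici (0 : ℝ), ∀ v, 0 ≤ f v t)
    (hfi : ∀ t ∈ Ici (0 : ℝ), Integrable (fun v => f v t))
    (hf : ∀ v, ∀ t ∈ Ici (0 : ℝ),
      HasDerivWithinAt (fun s => f v s) (Qp p b (fun w => f w t) v) (Ici 0) t) :
    ∃ g, IsRegularSol p (angular b) g ∧ ∀ᵐ v, ∀ t, 0 ≤ t → g v t = f v t := by
  have hmax : ∀ t : ℝ, max t 0 ∈ Ici (0 : ℝ) := fun t => mem_Ici.2 (le_max_right _ _)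
  have haem : ∀ q : ℚ, AEMeasurable (fun v => f v (max (q : ℝ) 0)) := fun q =>
    (hfi _ (hmax q)).1.aemeasurable
  set N : Set ℝ := toMeasurable volume
    (⋃ q : ℚ, {v | f v (max (q : ℝ) 0) ≠ (haem q).mk _ v}) with hNdef
  have hNm : MeasurableSet N := measurableSet_toMeasurable _ _
  have hN : volume N = 0 := by
    rw [hNdef, measure_toMeasurable, measure_iUnion_null_iff]
    exact fun q => (haem q).ae_eq_mk
  have hNq : ∀ v ∉ N, ∀ q : ℚ, f v (max (q : ℝ) 0) = (haem q).mk _ v := fun v hv q => by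
    by_contra hne
    exact hv (subset_toMeasurable _ _ (mem_iUnion.2 ⟨q, hne⟩))
  have hNae : ∀ᵐ v, v ∉ N := measure_eq_zero_iff_ae_notMem.1 hN
  set g : ℝ → ℝ → ℝ := fun v t => Nᶜ.indicator (fun v => f v (max t 0)) v with hg
  have hgN : ∀ v ∉ N, ∀ t, g v t = f v (max t 0) := fun v hv t => by
    simp only [hg]; exact indicator_of_mem hv _
  have hgN' : ∀ v ∈ N, ∀ t, g v t = 0 := fun v hv t => by
    simp only [hg]; exact indicator_of_notMem (notMem_compl_iff.2 hv) _
  have hcont : ∀ v, Continuous (g v) := by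
    intro v
    by_cases hv : v ∈ N
    · rw [funext (hgN' v hv)]; exact continuous_const
    · rw [funext (hgN v hv)]
      have : ContinuousOn (fun s => f v s) (Ici 0) := fun t ht => (hf v t ht).continuousWithinAt
      exact this.comp_continuous (by fun_prop) hmax
  have hmq : ∀ q : ℚ, Measurable fun v => g v q := by
    intro q
    have : (fun v => g v q) = Nᶜ.indicator ((haem q).mk _) := by
      funext v
      by_cases hv : v ∈ N
      · rw [hgN' v hv, indicator_of_notMem (notMem_compl_iff.2 hv)]
      · rw [hgN v hv, hNq v hv, indicator_of_mem (by exact hv)]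
    rw [this]
    exact (haem q).measurable_mk.indicator hNm.compl
  have hmt : ∀ t, Measurable fun v => g v t := by
    intro t
    obtain ⟨x, hx, hxt⟩ := mem_closure_iff_seq_limit.1 (Rat.denseRange_cast (𝕜 := ℝ) t)
    choose q hq using hx
    refine measurable_of_tendsto_metrizable (f := fun n v => g v (x n)) (fun n => ?_)
      (tendsto_pi_nhds.2 fun v => ((hcont v).tendsto t).comp hxt)
    rw [← hq n]; exact hmq (q n)
  refine ⟨g, ⟨fun v t => ?_, ?_, fun t => ?_, hcont, fun v t ht => ?_, ?_⟩, ?_⟩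
  · by_cases hv : v ∈ N
    · rw [hgN' v hv]
    · rw [hgN v hv]; exact hf0 _ (hmax t) v
  · have := measurable_uncurry_of_continuous_of_measurable (u := fun t v => g v t) hcont hmt
    exact this.comp measurable_swap
  · exact (hfi _ (hmax t)).indicator hNm.compl
  · simp only [hg, max_eq_right ht, max_self]
  · filter_upwards [hNae] with v hv t ht
    have h1 := hf v t ht
    rw [Qp_eq_Qν p hb h0, ← Qν_congr p hb hNm hN (h₁ := fun w => g w t)
      (fun w hw => by rw [hgN w hw, max_eq_left ht]) hv] at h1
    exact h1.congr (fun s hs => by rw [hgN v hv, max_eq_left hs])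
      (by rw [hgN v hv, max_eq_left ht])
  · filter_upwards [hNae] with v hv t ht
    rw [hgN v hv, max_eq_left ht]

end

/-- Exponential decay of the energy along the solution of the dissipative Kac
equation: `∫ v² f(v,t) dv = E₀ e^{-Lt}` with
`L = ∫ b(θ)(1 - |sinθ|^{2+2p} - |cosθ|^{2+2p}) dθ ≥ 0`. -/
theorem energy_decay
    (p : ℝ) (hp : 0 < p) (hp1 : p ≤ 1)
    (b : ℝ → ℝ) (hb_int : IntegrableOn b (Icc (-(π / 2)) (π / 2)))
    (hb_even : ∀ θ, b θ = b (-θ)) (hb_nonneg : ∀ θ, 0 ≤ b θ)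
    -- the initial probability density f₀ with finite energy E₀
    (f₀ : ℝ → ℝ) (E₀ : ℝ) (hf₀_nonneg : ∀ v, 0 ≤ f₀ v)
    (hf₀_int : Integrable f₀) (hf₀_mass : ∫ v, f₀ v = 1)
    (hf₀_energy_int : Integrable (fun v : ℝ => v ^ 2 * f₀ v))
    (hf₀_energy : ∫ v : ℝ, v ^ 2 * f₀ v = E₀)
    -- the solution f ∈ C¹([0,∞), L¹(ℝ,(1+v²)dv)) of ∂ₜ f = Q_p(f,f)
    (f : ℝ → ℝ → ℝ)
    (hf_init : ∀ v, f v 0 = f₀ v)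
    (hf_nonneg : ∀ t ∈ Ici (0 : ℝ), ∀ v, 0 ≤ f v t)
    (hf_int : ∀ t ∈ Ici (0 : ℝ), Integrable (fun v => (1 + v ^ 2) * f v t))
    (hf_eq : ∀ v, ∀ t ∈ Ici (0 : ℝ),
      HasDerivWithinAt (fun s => f v s) (Qp p b (fun w => f w t) v) (Ici 0) t) :
    0 ≤ ∫ θ in (-(π / 2))..(π / 2),
      b θ * (1 - |Real.sin θ| ^ (2 + 2 * p) - |Real.cos θ| ^ (2 + 2 * p)) ∧
    ∀ t ∈ Ici (0 : ℝ),
      ∫ v : ℝ, v ^ 2 * f v t =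
        E₀ * Real.exp (-(∫ θ in (-(π / 2))..(π / 2),
          b θ * (1 - |Real.sin θ| ^ (2 + 2 * p) - |Real.cos θ| ^ (2 + 2 * p))) * t) := by
  have := isFiniteMeasure_angular hb_int
  set ν := angular b with hνdef
  have hχ : Integrable (chi p) ν :=
    Integrable.of_bound (measurable_chi p).aestronglyMeasurable 1
      (Eventually.of_forall fun θ => by
        rw [Real.norm_of_nonneg (chi_nonneg p θ)]; exact chi_le_one p hp θ)
  -- The dissipation rate is the mass of the angular measure minus the mean of `χ`.
  have hL : ∫ θ in (-(π / 2))..(π / 2),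
      b θ * (1 - |Real.sin θ| ^ (2 + 2 * p) - |Real.cos θ| ^ (2 + 2 * p)) =
      ∫ θ, (1 - chi p θ) ∂ν := by
    rw [integral_angular hb_int hb_nonneg]
    simp only [chi, sub_sub]
  have hL' : ∫ θ, (1 - chi p θ) ∂ν =
      ν.real univ - (∫⁻ θ, ENNReal.ofReal (chi p θ) ∂ν).toReal := by
    rw [integral_sub (integrable_const _) hχ, integral_eq_lintegral_of_nonneg_ae
      (Eventually.of_forall (chi_nonneg p)) (measurable_chi p).aestronglyMeasurable]
    simp
  have hint : ∀ t ∈ Ici (0 : ℝ), Integrable (fun v => f v t) := fun t ht => by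
    refine ((hf_int t ht).bdd_mul (c := 1) (f := fun v : ℝ => (1 + v ^ 2)⁻¹)
      (by fun_prop) (Eventually.of_forall fun v => ?_)).congr (Eventually.of_forall fun v => ?_)
    · rw [Real.norm_of_nonneg (by positivity)]
      exact inv_le_one_of_one_le₀ (by nlinarith [sq_nonneg v])
    · have : (1 + v ^ 2 : ℝ) ≠ 0 := by positivity
      field_simp
  obtain ⟨g, hg, hgf⟩ := exists_regularSol (p := p) hb_int hb_nonneg hf_nonneg hint hf_eq
  have hgf' : ∀ t, 0 ≤ t → ∀ᵐ v, g v t = f v t := fun t ht => by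
    filter_upwards [hgf] with v hv using hv t ht
  have hsq : ∀ t, 0 ≤ t → Integrable fun v => v ^ 2 * g v t := fun t ht => by
    refine ((hf_int t ht).sub (hint t ht)).congr ?_
    filter_upwards [hgf' t ht] with v hv
    simp only [Pi.sub_apply, hv]; ring
  have hE : ∀ t, energy g t ≠ ∞ := by
    have h1 : ∀ t, 0 ≤ t → energy g t ≠ ∞ := fun t ht => by
      have := (hsq t ht).2
      rw [hasFiniteIntegral_iff_ofReal
        (Eventually.of_forall fun v => mul_nonneg (sq_nonneg v) (hg.nonneg v t))] at this
      exact this.ne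
    intro t
    rcases le_total 0 t with ht | ht
    · exact h1 t ht
    · have := h1 0 le_rfl
      unfold energy at this ⊢
      simpa only [hg.past _ t ht] using this
  have hM : mass g 0 = 1 := by
    have h1 : ∫ v, g v 0 = 1 := by
      rw [← hf₀_mass]
      refine integral_congr_ae ?_
      filter_upwards [hgf' 0 le_rfl] with v hv
      rw [hv, hf_init]
    rw [hg.integral_eq] at h1
    rw [← ENNReal.ofReal_toReal (hg.mass_ne_top 0), h1, ENNReal.ofReal_one]
  have hen : ∀ t, 0 ≤ t → ∫ v : ℝ, v ^ 2 * f v t = (energy g t).toReal := fun t ht => by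
    have h1 : ∫ v : ℝ, v ^ 2 * f v t = ∫ v : ℝ, v ^ 2 * g v t := by
      refine integral_congr_ae ?_
      filter_upwards [hgf' t ht] with v hv
      rw [hv]
    rw [h1, integral_eq_lintegral_of_nonneg_ae
      (Eventually.of_forall fun v => mul_nonneg (sq_nonneg v) (hg.nonneg v t)) (hsq t ht).1]
    rfl
  refine ⟨?_, fun t ht => ?_⟩
  · rw [hL]
    exact integral_nonneg fun θ => sub_nonneg.2 (chi_le_one p hp θ)
  · have hE0 : E₀ = (energy g 0).toReal := by
      rw [← hf₀_energy, ← hen 0 le_rfl]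
      simp only [hf_init]
    rw [hL, hL', hen t ht, hE0, hg.energy_eq hp (map_neg_angular hb_even) hM hE ht, neg_sub]

end
end
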